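/- arXiv:2107.10305 — 3 statements merged into one kernel-verified Lean document; each statement's English description precedes it below -/
import Mathlib

section
/- For every nonzero quadruple (s₁,s₂,s₃,s₄) ∈ ℤ⁴, define the integer weights γ_a = s₁+2s₃, γ_b = s₂+2s₃, γ_c = −s₁−s₂+2s₃, γ_d = s₁+2s₄, γ_e = s₂+2s₄, γ_f = −s₁−s₂+2s₄, γ_g = s₁−2s₃−2s₄, γ_h = s₂−2s₃−2s₄, γ_i = −s₁−s₂−2s₃−2s₄, γ_j = s₁+s₃+s₄, γ_k = s₂+s₃+s₄, γ_l = −s₁−s₂+s₃+s₄, γ_m = s₁−s₄, γ_n = s₂−s₄, γ_o = −s₁−s₂−s₄, γ_p = s₁−s₃, γ_q = s₂−s₃, γ_r = −s₁−s₂−s₃. If v ∈ V₃ has coefficients a,…,r such that, for every x ∈ {a,b,c,d,e,f,g,h,i,j,k,l,m,n,o,p,q,r}, the coefficient x is 0 whenever γ_x < 0, then Δ₃(v) = 0. -/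
/- The degree-4 Aronhold invariant S of the ternary cubic
   A X³ + B X²Y + C X²Z + D XY² + E XYZ + F XZ² + G Y³ + H Y²Z + I YZ² + J Z³. -/
def aronholdS {R : Type*} [CommRing R] (A B C D E F G H I J : R) : R :=
  E ^ 4 - 8 * D * E ^ 2 * F + 16 * D ^ 2 * F ^ 2 + 24 * C * E * F * G
       - 8 * C * E ^ 2 * H - 16 * C * D * F * H + 24 * C * D * E * I - 48 * C * D ^ 2 * J
       + 16 * C ^ 2 * H ^ 2 - 48 * C ^ 2 * G * I - 48 * B * F ^ 2 * G + 24 * B * E * F * H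
       - 8 * B * E ^ 2 * I - 16 * B * D * F * I + 24 * B * D * E * J - 16 * B * C * H * I
       + 144 * B * C * G * J + 16 * B ^ 2 * I ^ 2 - 48 * B ^ 2 * H * J - 48 * A * F * H ^ 2
       + 144 * A * F * G * I + 24 * A * E * H * I - 216 * A * E * G * J - 48 * A * D * I ^ 2
       + 144 * A * D * H * J

set_option maxHeartbeats 1600000 in
/- The degree-6 Aronhold invariant T of the same ternary cubic. -/
def aronholdT {R : Type*} [CommRing R] (A B C D E F G H I J : R) : R :=
  -E ^ 6 + 12 * D * E ^ 4 * F - 48 * D ^ 2 * E ^ 2 * F ^ 2 + 64 * D ^ 3 * F ^ 3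
       - 36 * C * E ^ 3 * F * G + 12 * C * E ^ 4 * H + 144 * C * D * E * F ^ 2 * G - 24 * C * D * E ^ 2 * F * H
       - 36 * C * D * E ^ 3 * I - 96 * C * D ^ 2 * F ^ 2 * H + 144 * C * D ^ 2 * E * F * I + 72 * C * D ^ 2 * E ^ 2 * J
       - 288 * C * D ^ 3 * F * J - 216 * C ^ 2 * F ^ 2 * G ^ 2 + 144 * C ^ 2 * E * F * G * H - 48 * C ^ 2 * E ^ 2 * H ^ 2
       + 72 * C ^ 2 * E ^ 2 * G * I - 96 * C ^ 2 * D * F * H ^ 2 + 144 * C ^ 2 * D * F * G * I + 144 * C ^ 2 * D * E * H * I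
       - 864 * C ^ 2 * D * E * G * J - 216 * C ^ 2 * D ^ 2 * I ^ 2 + 576 * C ^ 2 * D ^ 2 * H * J + 64 * C ^ 3 * H ^ 3
       - 288 * C ^ 3 * G * H * I + 864 * C ^ 3 * G ^ 2 * J + 72 * B * E ^ 2 * F ^ 2 * G - 36 * B * E ^ 3 * F * H
       + 12 * B * E ^ 4 * I - 288 * B * D * F ^ 3 * G + 144 * B * D * E * F ^ 2 * H - 24 * B * D * E ^ 2 * F * I
       - 36 * B * D * E ^ 3 * J - 96 * B * D ^ 2 * F ^ 2 * I + 144 * B * D ^ 2 * E * F * J + 144 * B * C * F ^ 2 * G * H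
       + 144 * B * C * E * F * H ^ 2 - 720 * B * C * E * F * G * I - 24 * B * C * E ^ 2 * H * I + 648 * B * C * E ^ 2 * G * J
       - 48 * B * C * D * F * H * I + 1296 * B * C * D * F * G * J + 144 * B * C * D * E * I ^ 2 - 720 * B * C * D * E * H * J
       + 144 * B * C * D ^ 2 * I * J - 96 * B * C ^ 2 * H ^ 2 * I + 576 * B * C ^ 2 * G * I ^ 2 - 864 * B * C ^ 2 * G * H * J
       - 216 * B ^ 2 * F ^ 2 * H ^ 2 + 576 * B ^ 2 * F ^ 2 * G * I + 144 * B ^ 2 * E * F * H * I - 864 * B ^ 2 * E * F * G * J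
       - 48 * B ^ 2 * E ^ 2 * I ^ 2 + 72 * B ^ 2 * E ^ 2 * H * J - 96 * B ^ 2 * D * F * I ^ 2 + 144 * B ^ 2 * D * F * H * J
       + 144 * B ^ 2 * D * E * I * J - 216 * B ^ 2 * D ^ 2 * J ^ 2 - 96 * B ^ 2 * C * H * I ^ 2 + 576 * B ^ 2 * C * H ^ 2 * J
       - 864 * B ^ 2 * C * G * I * J + 64 * B ^ 3 * I ^ 3 - 288 * B ^ 3 * H * I * J + 864 * B ^ 3 * G * J ^ 2
       + 864 * A * F ^ 3 * G ^ 2 - 864 * A * E * F ^ 2 * G * H + 72 * A * E ^ 2 * F * H ^ 2 + 648 * A * E ^ 2 * F * G * I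
       - 36 * A * E ^ 3 * H * I - 540 * A * E ^ 3 * G * J + 576 * A * D * F ^ 2 * H ^ 2 - 864 * A * D * F ^ 2 * G * I
       - 720 * A * D * E * F * H * I + 1296 * A * D * E * F * G * J + 72 * A * D * E ^ 2 * I ^ 2 + 648 * A * D * E ^ 2 * H * J
       + 576 * A * D ^ 2 * F * I ^ 2 - 864 * A * D ^ 2 * F * H * J - 864 * A * D ^ 2 * E * I * J + 864 * A * D ^ 3 * J ^ 2
       - 288 * A * C * F * H ^ 3 + 1296 * A * C * F * G * H * I - 3888 * A * C * F * G ^ 2 * J + 144 * A * C * E * H ^ 2 * I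
       - 864 * A * C * E * G * I ^ 2 + 1296 * A * C * E * G * H * J + 144 * A * C * D * H * I ^ 2 - 864 * A * C * D * H ^ 2 * J
       + 1296 * A * C * D * G * I * J + 144 * A * B * F * H ^ 2 * I - 864 * A * B * F * G * I ^ 2 + 1296 * A * B * F * G * H * J
       + 144 * A * B * E * H * I ^ 2 - 864 * A * B * E * H ^ 2 * J + 1296 * A * B * E * G * I * J - 288 * A * B * D * I ^ 3
       + 1296 * A * B * D * H * I * J - 3888 * A * B * D * G * J ^ 2 - 216 * A ^ 2 * H ^ 2 * I ^ 2 + 864 * A ^ 2 * H ^ 3 * J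
       + 864 * A ^ 2 * G * I ^ 3 - 3888 * A ^ 2 * G * H * I * J + 5832 * A ^ 2 * G ^ 2 * J ^ 2

/- The coefficients A,…,J (as polynomials in the 18 coordinates a,…,r of a vector
v ∈ V₃, here `c 0, …, c 17`) of the ternary cubic disc₂(v) in X, Y, Z, where disc₂ is the
discriminant of v regarded as a quadratic form in (T,U,W):
disc₂(q) = 4ABC + DEF − AF² − BE² − CD² for q = A T² + B U² + C W² + D TU + E TW + F UW. -/
def v3DiscCoeffs {L : Type*} [CommRing L] (c : Fin 18 → L) : Fin 10 → L :=
  ![c 9 * c 12 * c 15 - c 6 * c 9 ^ 2 - c 3 * c 12 ^ 2 - c 0 * c 15 ^ 2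
       + 4 * c 0 * c 3 * c 6,
    c 10 * c 12 * c 15 + c 9 * c 13 * c 15 + c 9 * c 12 * c 16 - c 7 * c 9 ^ 2
       - 2 * c 6 * c 9 * c 10 - c 4 * c 12 ^ 2 - 2 * c 3 * c 12 * c 13 - c 1 * c 15 ^ 2
       + 4 * c 1 * c 3 * c 6 - 2 * c 0 * c 15 * c 16 + 4 * c 0 * c 4 * c 6 + 4 * c 0 * c 3 * c 7,
    c 11 * c 12 * c 15 + c 9 * c 14 * c 15 + c 9 * c 12 * c 17 - c 8 * c 9 ^ 2
       - 2 * c 6 * c 9 * c 11 - c 5 * c 12 ^ 2 - 2 * c 3 * c 12 * c 14 - c 2 * c 15 ^ 2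
       + 4 * c 2 * c 3 * c 6 - 2 * c 0 * c 15 * c 17 + 4 * c 0 * c 5 * c 6 + 4 * c 0 * c 3 * c 8,
    c 10 * c 13 * c 15 + c 10 * c 12 * c 16 + c 9 * c 13 * c 16 - 2 * c 7 * c 9 * c 10
       - c 6 * c 10 ^ 2 - 2 * c 4 * c 12 * c 13 - c 3 * c 13 ^ 2 - 2 * c 1 * c 15 * c 16
       + 4 * c 1 * c 4 * c 6 + 4 * c 1 * c 3 * c 7 - c 0 * c 16 ^ 2 + 4 * c 0 * c 4 * c 7,
    c 11 * c 13 * c 15 + c 11 * c 12 * c 16 + c 10 * c 14 * c 15 + c 10 * c 12 * c 17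
       + c 9 * c 14 * c 16 + c 9 * c 13 * c 17 - 2 * c 8 * c 9 * c 10 - 2 * c 7 * c 9 * c 11
       - 2 * c 6 * c 10 * c 11 - 2 * c 5 * c 12 * c 13 - 2 * c 4 * c 12 * c 14 - 2 * c 3 * c 13 * c 14
       - 2 * c 2 * c 15 * c 16 + 4 * c 2 * c 4 * c 6 + 4 * c 2 * c 3 * c 7 - 2 * c 1 * c 15 * c 17
       + 4 * c 1 * c 5 * c 6 + 4 * c 1 * c 3 * c 8 - 2 * c 0 * c 16 * c 17 + 4 * c 0 * c 5 * c 7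
       + 4 * c 0 * c 4 * c 8,
    c 11 * c 14 * c 15 + c 11 * c 12 * c 17 + c 9 * c 14 * c 17 - 2 * c 8 * c 9 * c 11
       - c 6 * c 11 ^ 2 - 2 * c 5 * c 12 * c 14 - c 3 * c 14 ^ 2 - 2 * c 2 * c 15 * c 17
       + 4 * c 2 * c 5 * c 6 + 4 * c 2 * c 3 * c 8 - c 0 * c 17 ^ 2 + 4 * c 0 * c 5 * c 8,
    c 10 * c 13 * c 16 - c 7 * c 10 ^ 2 - c 4 * c 13 ^ 2 - c 1 * c 16 ^ 2
       + 4 * c 1 * c 4 * c 7,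
    c 11 * c 13 * c 16 + c 10 * c 14 * c 16 + c 10 * c 13 * c 17 - c 8 * c 10 ^ 2
       - 2 * c 7 * c 10 * c 11 - c 5 * c 13 ^ 2 - 2 * c 4 * c 13 * c 14 - c 2 * c 16 ^ 2
       + 4 * c 2 * c 4 * c 7 - 2 * c 1 * c 16 * c 17 + 4 * c 1 * c 5 * c 7 + 4 * c 1 * c 4 * c 8,
    c 11 * c 14 * c 16 + c 11 * c 13 * c 17 + c 10 * c 14 * c 17 - 2 * c 8 * c 10 * c 11
       - c 7 * c 11 ^ 2 - 2 * c 5 * c 13 * c 14 - c 4 * c 14 ^ 2 - 2 * c 2 * c 16 * c 17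
       + 4 * c 2 * c 5 * c 7 + 4 * c 2 * c 4 * c 8 - c 1 * c 17 ^ 2 + 4 * c 1 * c 5 * c 8,
    c 11 * c 14 * c 17 - c 8 * c 11 ^ 2 - c 5 * c 14 ^ 2 - c 2 * c 17 ^ 2
       + 4 * c 2 * c 5 * c 8]

/- Δ₃ = disc₃ ∘ disc₂, where disc₃ is the integer polynomial with 1728·disc₃ = S³ − T²
(passed as the argument `disc3`), interpreted in L via ℤ → L. -/
noncomputable def Delta3 {L : Type*} [CommRing L]
    (disc3 : MvPolynomial (Fin 10) ℤ) (c : Fin 18 → L) : L :=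
  MvPolynomial.aeval (v3DiscCoeffs c) disc3

/-- The weights of the eighteen coordinates under the cocharacter `(s₁, s₂, s₃, s₄)`. -/
def coordWeight (s₁ s₂ s₃ s₄ : ℤ) : Fin 18 → ℤ :=
  ![s₁ + 2*s₃, s₂ + 2*s₃, -s₁ - s₂ + 2*s₃,
    s₁ + 2*s₄, s₂ + 2*s₄, -s₁ - s₂ + 2*s₄,
    s₁ - 2*s₃ - 2*s₄, s₂ - 2*s₃ - 2*s₄, -s₁ - s₂ - 2*s₃ - 2*s₄,
    s₁ + s₃ + s₄, s₂ + s₃ + s₄, -s₁ - s₂ + s₃ + s₄,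
    s₁ - s₄, s₂ - s₄, -s₁ - s₂ - s₄,
    s₁ - s₃, s₂ - s₃, -s₁ - s₂ - s₃]

/-- The weights of the ten coefficients of a ternary cubic under the cocharacter `(s₁, s₂)`. -/
def cubicWeight (s₁ s₂ : ℤ) : Fin 10 → ℤ :=
  ![3*s₁, 2*s₁ + s₂, s₁ - s₂, s₁ + 2*s₂, 0, -s₁ - 2*s₂, 3*s₂, s₂ - s₁, -2*s₁ - s₂, -3*s₁ - 3*s₂]

section

variable {R : Type*} [CommRing R]

theorem mul_mul_eq_zero_of_weight_neg {ι : Type*} {c : ι → R} {w : ι → ℤ}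
    (hc : ∀ i, w i < 0 → c i = 0) {i j k : ι} (h : w i + w j + w k < 0) :
    c i * c j * c k = 0 := by
  obtain hi | hj | hk : w i < 0 ∨ w j < 0 ∨ w k < 0 := by omega
  · simp [hc i hi]
  · simp [hc j hj]
  · simp [hc k hk]

/-- `disc₂` is equivariant for the torus, so its coefficients of negative weight vanish when the
coordinates of negative weight do. -/
theorem v3DiscCoeffs_eq_zero_of_weight_neg {s₁ s₂ s₃ s₄ : ℤ} {c : Fin 18 → R}
    (hc : ∀ i, coordWeight s₁ s₂ s₃ s₄ i < 0 → c i = 0) (m : Fin 10)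
    (hm : cubicWeight s₁ s₂ m < 0) : v3DiscCoeffs c m = 0 := by
  have h (i j k : Fin 18)
      (hw : coordWeight s₁ s₂ s₃ s₄ i + coordWeight s₁ s₂ s₃ s₄ j + coordWeight s₁ s₂ s₃ s₄ k =
        cubicWeight s₁ s₂ m := by simp [coordWeight, cubicWeight]; ring) :
      c i * c j * c k = 0 :=
    mul_mul_eq_zero_of_weight_neg hc (hw.trans_lt hm)
  fin_cases m <;> simp only [v3DiscCoeffs, Fin.reduceFinMk, Fin.isValue, Fin.zero_eta,
    Fin.mk_one, Matrix.cons_val]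
  · linear_combination h 9 12 15 - h 6 9 9 - h 3 12 12 - h 0 15 15 + 4 * h 0 3 6
  · linear_combination h 10 12 15 + h 9 13 15 + h 9 12 16 - h 7 9 9 - 2 * h 6 9 10 - h 4 12 12
      - 2 * h 3 12 13 - h 1 15 15 + 4 * h 1 3 6 - 2 * h 0 15 16 + 4 * h 0 4 6 + 4 * h 0 3 7
  · linear_combination h 11 12 15 + h 9 14 15 + h 9 12 17 - h 8 9 9 - 2 * h 6 9 11 - h 5 12 12
      - 2 * h 3 12 14 - h 2 15 15 + 4 * h 2 3 6 - 2 * h 0 15 17 + 4 * h 0 5 6 + 4 * h 0 3 8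
  · linear_combination h 10 13 15 + h 10 12 16 + h 9 13 16 - 2 * h 7 9 10 - h 6 10 10
      - 2 * h 4 12 13 - h 3 13 13 - 2 * h 1 15 16 + 4 * h 1 4 6 + 4 * h 1 3 7 - h 0 16 16
      + 4 * h 0 4 7
  · linear_combination h 11 13 15 + h 11 12 16 + h 10 14 15 + h 10 12 17 + h 9 14 16
      + h 9 13 17 - 2 * h 8 9 10 - 2 * h 7 9 11 - 2 * h 6 10 11 - 2 * h 5 12 13 - 2 * h 4 12 14
      - 2 * h 3 13 14 - 2 * h 2 15 16 + 4 * h 2 4 6 + 4 * h 2 3 7 - 2 * h 1 15 17 + 4 * h 1 5 6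
      + 4 * h 1 3 8 - 2 * h 0 16 17 + 4 * h 0 5 7 + 4 * h 0 4 8
  · linear_combination h 11 14 15 + h 11 12 17 + h 9 14 17 - 2 * h 8 9 11 - h 6 11 11
      - 2 * h 5 12 14 - h 3 14 14 - 2 * h 2 15 17 + 4 * h 2 5 6 + 4 * h 2 3 8 - h 0 17 17
      + 4 * h 0 5 8
  · linear_combination h 10 13 16 - h 7 10 10 - h 4 13 13 - h 1 16 16 + 4 * h 1 4 7
  · linear_combination h 11 13 16 + h 10 14 16 + h 10 13 17 - h 8 10 10 - 2 * h 7 10 11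
      - h 5 13 13 - 2 * h 4 13 14 - h 2 16 16 + 4 * h 2 4 7 - 2 * h 1 16 17 + 4 * h 1 5 7
      + 4 * h 1 4 8
  · linear_combination h 11 14 16 + h 11 13 17 + h 10 14 17 - 2 * h 8 10 11 - h 7 11 11
      - 2 * h 5 13 14 - h 4 14 14 - 2 * h 2 16 17 + 4 * h 2 5 7 + 4 * h 2 4 8 - h 1 17 17
      + 4 * h 1 5 8
  · linear_combination h 11 14 17 - h 8 11 11 - h 5 14 14 - h 2 17 17 + 4 * h 2 5 8

/-- `S³ - T²`, that is `1728 disc₃`, as a function of the vector of coefficients. -/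
def aronholdDisc (u : Fin 10 → R) : R :=
  aronholdS (u 0) (u 1) (u 2) (u 3) (u 4) (u 5) (u 6) (u 7) (u 8) (u 9) ^ 3 -
    aronholdT (u 0) (u 1) (u 2) (u 3) (u 4) (u 5) (u 6) (u 7) (u 8) (u 9) ^ 2

theorem aronholdDisc_eq_zero_of_eq {u : Fin 10 → R} (q : R)
    (hS : aronholdS (u 0) (u 1) (u 2) (u 3) (u 4) (u 5) (u 6) (u 7) (u 8) (u 9) = q ^ 2)
    (hT : aronholdT (u 0) (u 1) (u 2) (u 3) (u 4) (u 5) (u 6) (u 7) (u 8) (u 9) = -q ^ 3) :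
    aronholdDisc u = 0 := by
  rw [aronholdDisc, hS, hT]
  ring

/-- If a cubic has no coefficient of negative weight for a nontrivial cocharacter, then it is
singular: a coordinate point is singular on it, or a coordinate line is a component. -/
theorem aronholdDisc_eq_zero_of_weight_neg {s₁ s₂ : ℤ} (hs : ¬(s₁ = 0 ∧ s₂ = 0)) {u : Fin 10 → R}
    (hu : ∀ m, cubicWeight s₁ s₂ m < 0 → u m = 0) : aronholdDisc u = 0 := by
  have hcases : (s₁ < s₂ ∧ 2*s₁ + s₂ < 0) ∨ (s₂ < s₁ ∧ s₁ + 2*s₂ < 0) ∨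
      (-s₁ - 2*s₂ < 0 ∧ -2*s₁ - s₂ < 0) ∨ (s₁ = s₂ ∧ s₁ < 0) ∨
      (s₁ = -s₁ - s₂ ∧ s₁ < 0) ∨ (s₂ = -s₁ - s₂ ∧ s₂ < 0) := by omega
  have h0 := hu 0
  have h1 := hu 1
  have h2 := hu 2
  have h3 := hu 3
  have h5 := hu 5
  have h6 := hu 6
  have h7 := hu 7
  have h8 := hu 8
  have h9 := hu 9
  simp only [cubicWeight, Fin.isValue, Matrix.cons_val] at h0 h1 h2 h3 h5 h6 h7 h8 h9
  obtain h | h | h | h | h | h := hcases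
  · apply aronholdDisc_eq_zero_of_eq (u 4 ^ 2 - 4 * u 3 * u 5) <;>
      rw [h0 (by omega), h1 (by omega), h2 (by omega)]
    · unfold aronholdS; ring
    · unfold aronholdT; ring
  · apply aronholdDisc_eq_zero_of_eq (u 4 ^ 2 - 4 * u 1 * u 8) <;>
      rw [h3 (by omega), h6 (by omega), h7 (by omega)]
    · unfold aronholdS; ring
    · unfold aronholdT; ring
  · apply aronholdDisc_eq_zero_of_eq (u 4 ^ 2 - 4 * u 2 * u 7) <;>
      rw [h5 (by omega), h8 (by omega), h9 (by omega)]
    · unfold aronholdS; ring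
    · unfold aronholdT; ring
  · apply aronholdDisc_eq_zero_of_eq (u 4 ^ 2 - 4 * u 2 * u 7) <;>
      rw [h0 (by omega), h1 (by omega), h3 (by omega), h6 (by omega)]
    · unfold aronholdS; ring
    · unfold aronholdT; ring
  · apply aronholdDisc_eq_zero_of_eq (u 4 ^ 2 - 4 * u 1 * u 8) <;>
      rw [h0 (by omega), h2 (by omega), h5 (by omega), h9 (by omega)]
    · unfold aronholdS; ring
    · unfold aronholdT; ring
  · apply aronholdDisc_eq_zero_of_eq (u 4 ^ 2 - 4 * u 3 * u 5) <;>
      rw [h6 (by omega), h7 (by omega), h8 (by omega), h9 (by omega)]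
    · unfold aronholdS; ring
    · unfold aronholdT; ring

/-- The coefficients of the cubic `(x X + y Y + z Z) (p X + q Y + r Z)²`. -/
def linearMulSqCoeffs (x y z p q r : R) : Fin 10 → R :=
  ![x * p ^ 2, 2 * x * p * q + y * p ^ 2, 2 * x * p * r + z * p ^ 2, x * q ^ 2 + 2 * y * p * q,
    2 * x * q * r + 2 * y * p * r + 2 * z * p * q, x * r ^ 2 + 2 * z * p * r,
    y * q ^ 2, 2 * y * q * r + z * q ^ 2, y * r ^ 2 + 2 * z * q * r, z * r ^ 2]

theorem aronholdDisc_linearMulSqCoeffs (x y z p q r : R) :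
    aronholdDisc (linearMulSqCoeffs x y z p q r) = 0 := by
  have hS : aronholdS (x * p ^ 2) (2 * x * p * q + y * p ^ 2) (2 * x * p * r + z * p ^ 2)
      (x * q ^ 2 + 2 * y * p * q) (2 * x * q * r + 2 * y * p * r + 2 * z * p * q)
      (x * r ^ 2 + 2 * z * p * r) (y * q ^ 2) (2 * y * q * r + z * q ^ 2)
      (y * r ^ 2 + 2 * z * q * r) (z * r ^ 2) = 0 := by
    unfold aronholdS; ring
  have hT : aronholdT (x * p ^ 2) (2 * x * p * q + y * p ^ 2) (2 * x * p * r + z * p ^ 2)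
      (x * q ^ 2 + 2 * y * p * q) (2 * x * q * r + 2 * y * p * r + 2 * z * p * q)
      (x * r ^ 2 + 2 * z * p * r) (y * q ^ 2) (2 * y * q * r + z * q ^ 2)
      (y * r ^ 2 + 2 * z * q * r) (z * r ^ 2) = 0 := by
    unfold aronholdT; ring
  simp [aronholdDisc, linearMulSqCoeffs, hS, hT]

/-- A cocharacter acting only on `(T, U, W)` forces two zeros in the same row of the symmetric
matrix of `v`, one of them diagonal; hence `disc₂ v` has a multiple component. -/
theorem exists_v3DiscCoeffs_eq_linearMulSqCoeffs {s₃ s₄ : ℤ} (hs : ¬(s₃ = 0 ∧ s₄ = 0))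
    {c : Fin 18 → R} (hc : ∀ i, coordWeight 0 0 s₃ s₄ i < 0 → c i = 0) :
    ∃ x y z p q r : R, v3DiscCoeffs c = linearMulSqCoeffs x y z p q r := by
  have hz (i : Fin 18) (hi : coordWeight 0 0 s₃ s₄ i < 0 := by
      simp only [coordWeight, Fin.isValue, Matrix.cons_val]; omega) : c i = 0 := hc i hi
  have hcases : (s₃ < 0 ∧ s₃ + s₄ < 0) ∨ (s₃ < 0 ∧ 0 < s₄) ∨ (s₄ < 0 ∧ s₃ + s₄ < 0) ∨
      (s₄ < 0 ∧ 0 < s₃) ∨ (0 < s₃ + s₄ ∧ 0 < s₄) ∨ (0 < s₃ + s₄ ∧ 0 < s₃) := by omega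
  obtain h | h | h | h | h | h := hcases
  · refine ⟨-c 3, -c 4, -c 5, c 12, c 13, c 14, ?_⟩
    simp only [v3DiscCoeffs, linearMulSqCoeffs, hz 0, hz 1, hz 2, hz 9, hz 10, hz 11,
      Matrix.vecCons_inj, and_true]
    and_intros <;> ring
  · refine ⟨-c 6, -c 7, -c 8, c 9, c 10, c 11, ?_⟩
    simp only [v3DiscCoeffs, linearMulSqCoeffs, hz 0, hz 1, hz 2, hz 12, hz 13, hz 14,
      Matrix.vecCons_inj, and_true]
    and_intros <;> ring
  · refine ⟨-c 0, -c 1, -c 2, c 15, c 16, c 17, ?_⟩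
    simp only [v3DiscCoeffs, linearMulSqCoeffs, hz 3, hz 4, hz 5, hz 9, hz 10, hz 11,
      Matrix.vecCons_inj, and_true]
    and_intros <;> ring
  · refine ⟨-c 6, -c 7, -c 8, c 9, c 10, c 11, ?_⟩
    simp only [v3DiscCoeffs, linearMulSqCoeffs, hz 3, hz 4, hz 5, hz 15, hz 16, hz 17,
      Matrix.vecCons_inj, and_true]
    and_intros <;> ring
  · refine ⟨-c 0, -c 1, -c 2, c 15, c 16, c 17, ?_⟩
    simp only [v3DiscCoeffs, linearMulSqCoeffs, hz 6, hz 7, hz 8, hz 12, hz 13, hz 14,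
      Matrix.vecCons_inj, and_true]
    and_intros <;> ring
  · refine ⟨-c 3, -c 4, -c 5, c 12, c 13, c 14, ?_⟩
    simp only [v3DiscCoeffs, linearMulSqCoeffs, hz 6, hz 7, hz 8, hz 15, hz 16, hz 17,
      Matrix.vecCons_inj, and_true]
    and_intros <;> ring

theorem aronholdDisc_v3DiscCoeffs_eq_zero {s₁ s₂ s₃ s₄ : ℤ}
    (hs : ¬(s₁ = 0 ∧ s₂ = 0 ∧ s₃ = 0 ∧ s₄ = 0)) {c : Fin 18 → R}
    (hc : ∀ i, coordWeight s₁ s₂ s₃ s₄ i < 0 → c i = 0) : aronholdDisc (v3DiscCoeffs c) = 0 := by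
  by_cases h : s₁ = 0 ∧ s₂ = 0
  · obtain ⟨rfl, rfl⟩ := h
    obtain ⟨x, y, z, p, q, r, hd⟩ :=
      exists_v3DiscCoeffs_eq_linearMulSqCoeffs (by simpa using hs) hc
    rw [hd, aronholdDisc_linearMulSqCoeffs]
  · exact aronholdDisc_eq_zero_of_weight_neg h (v3DiscCoeffs_eq_zero_of_weight_neg hc)

theorem map_v3DiscCoeffs {R' : Type*} [CommRing R'] (f : R →+* R') (c : Fin 18 → R) :
    f ∘ v3DiscCoeffs c = v3DiscCoeffs (f ∘ c) := by
  ext m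
  fin_cases m <;> simp [v3DiscCoeffs, map_ofNat]

theorem map_Delta3 {R' : Type*} [CommRing R'] (f : R →+* R') (P : MvPolynomial (Fin 10) ℤ)
    (c : Fin 18 → R) : f (Delta3 P c) = Delta3 P (f ∘ c) := by
  unfold Delta3
  rw [← map_v3DiscCoeffs]
  exact MvPolynomial.comp_aeval_apply (v3DiscCoeffs c) f.toIntAlgHom P

theorem map_aronholdDisc {R' : Type*} [CommRing R'] (f : R →+* R') (u : Fin 10 → R) :
    f (aronholdDisc u) = aronholdDisc (f ∘ u) := by
  simp [aronholdDisc, aronholdS, aronholdT, map_ofNat]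

theorem mul_Delta3_eq_aronholdDisc {P : MvPolynomial (Fin 10) ℤ}
    (hP : 1728 * P = aronholdDisc MvPolynomial.X) (c : Fin 18 → R) :
    1728 * Delta3 P c = aronholdDisc (v3DiscCoeffs c) := by
  have h := congrArg (MvPolynomial.aeval (v3DiscCoeffs c)).toRingHom hP
  have hX : (MvPolynomial.aeval (v3DiscCoeffs c) : MvPolynomial (Fin 10) ℤ →ₐ[ℤ] R).toRingHom ∘
      MvPolynomial.X = v3DiscCoeffs c := by
    ext m
    simp
  rw [map_aronholdDisc, hX] at h
  simpa only [Delta3, AlgHom.toRingHom_eq_coe, RingHom.coe_coe, map_mul, map_ofNat] using h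

end

/-
STATEMENT 2 (Lemma 3.3 / `lem-invar3`): for every nonzero (s₁,s₂,s₃,s₄) ∈ ℤ⁴, if all
coordinates of v ∈ V₃ whose weight (with respect to the corresponding cocharacter of the
maximal torus of SL₃ × SL₃) is negative vanish, then Δ₃(v) = 0.  The coordinates
c 0,…,c 17 correspond to a,b,c,d,e,f,g,h,i,j,k,l,m,n,o,p,q,r of the paper.
-/
theorem Delta3_eq_zero_of_no_negative_weights
    {L : Type*} [Field L] [IsAlgClosed L]
    (disc3 : MvPolynomial (Fin 10) ℤ)
    (hdisc3 : 1728 * disc3 =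
      aronholdS (MvPolynomial.X 0) (MvPolynomial.X 1) (MvPolynomial.X 2) (MvPolynomial.X 3)
          (MvPolynomial.X 4) (MvPolynomial.X 5) (MvPolynomial.X 6) (MvPolynomial.X 7)
          (MvPolynomial.X 8) (MvPolynomial.X 9) ^ 3 -
      aronholdT (MvPolynomial.X 0) (MvPolynomial.X 1) (MvPolynomial.X 2) (MvPolynomial.X 3)
          (MvPolynomial.X 4) (MvPolynomial.X 5) (MvPolynomial.X 6) (MvPolynomial.X 7)
          (MvPolynomial.X 8) (MvPolynomial.X 9) ^ 2)
    (s₁ s₂ s₃ s₄ : ℤ) (hs : ¬(s₁ = 0 ∧ s₂ = 0 ∧ s₃ = 0 ∧ s₄ = 0))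
    (c : Fin 18 → L)
    (h0 : (s₁ + 2*s₃ : ℤ) < 0 → c 0 = 0)
    (h1 : (s₂ + 2*s₃ : ℤ) < 0 → c 1 = 0)
    (h2 : (-s₁ - s₂ + 2*s₃ : ℤ) < 0 → c 2 = 0)
    (h3 : (s₁ + 2*s₄ : ℤ) < 0 → c 3 = 0)
    (h4 : (s₂ + 2*s₄ : ℤ) < 0 → c 4 = 0)
    (h5 : (-s₁ - s₂ + 2*s₄ : ℤ) < 0 → c 5 = 0)
    (h6 : (s₁ - 2*s₃ - 2*s₄ : ℤ) < 0 → c 6 = 0)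
    (h7 : (s₂ - 2*s₃ - 2*s₄ : ℤ) < 0 → c 7 = 0)
    (h8 : (-s₁ - s₂ - 2*s₃ - 2*s₄ : ℤ) < 0 → c 8 = 0)
    (h9 : (s₁ + s₃ + s₄ : ℤ) < 0 → c 9 = 0)
    (h10 : (s₂ + s₃ + s₄ : ℤ) < 0 → c 10 = 0)
    (h11 : (-s₁ - s₂ + s₃ + s₄ : ℤ) < 0 → c 11 = 0)
    (h12 : (s₁ - s₄ : ℤ) < 0 → c 12 = 0)
    (h13 : (s₂ - s₄ : ℤ) < 0 → c 13 = 0)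
    (h14 : (-s₁ - s₂ - s₄ : ℤ) < 0 → c 14 = 0)
    (h15 : (s₁ - s₃ : ℤ) < 0 → c 15 = 0)
    (h16 : (s₂ - s₃ : ℤ) < 0 → c 16 = 0)
    (h17 : (-s₁ - s₂ - s₃ : ℤ) < 0 → c 17 = 0) :
    Delta3 disc3 c = 0 := by
  have hc : ∀ i, coordWeight s₁ s₂ s₃ s₄ i < 0 → c i = 0 := by
    intro i
    fin_cases i
    exacts [h0, h1, h2, h3, h4, h5, h6, h7, h8, h9, h10, h11, h12, h13, h14, h15, h16, h17]
  -- Lift `c` to characteristic zero, where `1728` can be cancelled.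
  let C : Fin 18 → MvPolynomial (Fin 18) ℤ := fun i =>
    if coordWeight s₁ s₂ s₃ s₄ i < 0 then 0 else MvPolynomial.X i
  have hC : ∀ i, coordWeight s₁ s₂ s₃ s₄ i < 0 → C i = 0 := fun i hi => if_pos hi
  have hCc : (MvPolynomial.aeval c : MvPolynomial (Fin 18) ℤ →ₐ[ℤ] L).toRingHom ∘ C = c := by
    ext i
    by_cases hi : coordWeight s₁ s₂ s₃ s₄ i < 0 <;> simp [C, hi, hc]
  have hlift : 1728 * Delta3 disc3 C = 0 :=
    (mul_Delta3_eq_aronholdDisc hdisc3 C).trans (aronholdDisc_v3DiscCoeffs_eq_zero hs hC)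
  have hzero : Delta3 disc3 C = 0 := (mul_eq_zero.mp hlift).resolve_left (by norm_num)
  rw [← hCc, ← map_Delta3, hzero, map_zero]
end

section
/- For every prime number p, taking L to be an algebraic closure of 𝔽_p, there exists a vector v ∈ V₃ all of whose 18 coefficients a,…,r lie in the prime subfield 𝔽_p and which is stable for the action of SL₃(L)×SL₃(L). (For instance, Δ₃((X+Z)T² + (X+Z)U² + ZW² + (Y+Z)TU + (X+Z)TW + YUW) = 225, which is nonzero in every 𝔽_p with p = 2, and for odd p dual cyclic vectors are stable.) -/
/- Zariski-closedness of a subset of affine n-space over L: it is the common zero locus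
of a set of polynomial functions (with respect to the fixed coordinates). -/
def IsZariskiClosed {n : ℕ} {L : Type*} [CommRing L] (s : Set (Fin n → L)) : Prop :=
  ∃ P : Set (MvPolynomial (Fin n) L), s = {x | ∀ p ∈ P, MvPolynomial.eval x p = 0}

/- The element of V₃ ⊆ L[X,Y,Z,T,U,W] (variables: inl 0,1,2 = X,Y,Z and inr 0,1,2 = T,U,W)
with coordinates c = (a,b,…,r):
v = (aX+bY+cZ)T² + (dX+eY+fZ)U² + (gX+hY+iZ)W² + (jX+kY+lZ)TU + (mX+nY+oZ)TW + (pX+qY+rZ)UW. -/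
noncomputable def toPoly3 {L : Type*} [CommRing L] (c : Fin 18 → L) :
    MvPolynomial (Fin 3 ⊕ Fin 3) L :=
  (MvPolynomial.C (c 0) * MvPolynomial.X (Sum.inl 0) + MvPolynomial.C (c 1) * MvPolynomial.X (Sum.inl 1)
      + MvPolynomial.C (c 2) * MvPolynomial.X (Sum.inl 2)) * MvPolynomial.X (Sum.inr 0) ^ 2
  + (MvPolynomial.C (c 3) * MvPolynomial.X (Sum.inl 0) + MvPolynomial.C (c 4) * MvPolynomial.X (Sum.inl 1)
      + MvPolynomial.C (c 5) * MvPolynomial.X (Sum.inl 2)) * MvPolynomial.X (Sum.inr 1) ^ 2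
  + (MvPolynomial.C (c 6) * MvPolynomial.X (Sum.inl 0) + MvPolynomial.C (c 7) * MvPolynomial.X (Sum.inl 1)
      + MvPolynomial.C (c 8) * MvPolynomial.X (Sum.inl 2)) * MvPolynomial.X (Sum.inr 2) ^ 2
  + (MvPolynomial.C (c 9) * MvPolynomial.X (Sum.inl 0) + MvPolynomial.C (c 10) * MvPolynomial.X (Sum.inl 1)
      + MvPolynomial.C (c 11) * MvPolynomial.X (Sum.inl 2)) * (MvPolynomial.X (Sum.inr 0) * MvPolynomial.X (Sum.inr 1))
  + (MvPolynomial.C (c 12) * MvPolynomial.X (Sum.inl 0) + MvPolynomial.C (c 13) * MvPolynomial.X (Sum.inl 1)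
      + MvPolynomial.C (c 14) * MvPolynomial.X (Sum.inl 2)) * (MvPolynomial.X (Sum.inr 0) * MvPolynomial.X (Sum.inr 2))
  + (MvPolynomial.C (c 15) * MvPolynomial.X (Sum.inl 0) + MvPolynomial.C (c 16) * MvPolynomial.X (Sum.inl 1)
      + MvPolynomial.C (c 17) * MvPolynomial.X (Sum.inl 2)) * (MvPolynomial.X (Sum.inr 1) * MvPolynomial.X (Sum.inr 2))

/- The action of SL₃(L) × SL₃(L) by linear substitution of (X,Y,Z) and (T,U,W). -/
noncomputable def act3 {L : Type*} [CommRing L]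
    (g : Matrix.SpecialLinearGroup (Fin 3) L × Matrix.SpecialLinearGroup (Fin 3) L)
    (v : MvPolynomial (Fin 3 ⊕ Fin 3) L) : MvPolynomial (Fin 3 ⊕ Fin 3) L :=
  MvPolynomial.aeval
    (Sum.elim (fun i => ∑ j : Fin 3, MvPolynomial.C (g.1.1 i j) * MvPolynomial.X (Sum.inl j))
              (fun i => ∑ j : Fin 3, MvPolynomial.C (g.2.1 i j) * MvPolynomial.X (Sum.inr j))) v

/- Stability: the orbit of v (in the coordinate space of V₃ with respect to its monomial
basis) is Zariski-closed and the stabilizer of v in SL₃(L) × SL₃(L) is finite. -/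
def Stable3 {L : Type*} [Field L] (c : Fin 18 → L) : Prop :=
  IsZariskiClosed {c' : Fin 18 → L |
    ∃ g : Matrix.SpecialLinearGroup (Fin 3) L × Matrix.SpecialLinearGroup (Fin 3) L,
      toPoly3 c' = act3 g (toPoly3 c)} ∧
  {g : Matrix.SpecialLinearGroup (Fin 3) L × Matrix.SpecialLinearGroup (Fin 3) L |
      act3 g (toPoly3 c) = toPoly3 c}.Finite


/-- The quadratic map `t ↦ (q₀(t), q₁(t), q₂(t))` whose components are the coefficients of
`X, Y, Z` in the element of `V₃` with coordinates `c`. -/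
def net {R : Type*} [CommRing R] (c : Fin 18 → R) (t : Fin 3 → R) : Fin 3 → R :=
  ![c 0 * t 0 ^ 2 + c 3 * t 1 ^ 2 + c 6 * t 2 ^ 2 + c 9 * (t 0 * t 1) + c 12 * (t 0 * t 2)
      + c 15 * (t 1 * t 2),
    c 1 * t 0 ^ 2 + c 4 * t 1 ^ 2 + c 7 * t 2 ^ 2 + c 10 * (t 0 * t 1) + c 13 * (t 0 * t 2)
      + c 16 * (t 1 * t 2),
    c 2 * t 0 ^ 2 + c 5 * t 1 ^ 2 + c 8 * t 2 ^ 2 + c 11 * (t 0 * t 1) + c 14 * (t 0 * t 2)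
      + c 17 * (t 1 * t 2)]

/-- The symmetric bilinear map obtained by polarizing `net c`. -/
def netPolar {R : Type*} [CommRing R] (c : Fin 18 → R) (s t : Fin 3 → R) : Fin 3 → R :=
  net c (s + t) - net c s - net c t

/-- The coordinates of the element of `V₃` obtained from the one with coordinates `c` by the
substitutions `A` and `B`. -/
def actCoeff {R : Type*} [CommRing R] (A B : Matrix (Fin 3) (Fin 3) R) (c : Fin 18 → R) :
    Fin 18 → R :=
  let u := A.transpose.mulVec (net c (B.col 0))
  let v := A.transpose.mulVec (net c (B.col 1))
  let w := A.transpose.mulVec (net c (B.col 2))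
  let x := A.transpose.mulVec (netPolar c (B.col 0) (B.col 1))
  let y := A.transpose.mulVec (netPolar c (B.col 0) (B.col 2))
  let z := A.transpose.mulVec (netPolar c (B.col 1) (B.col 2))
  ![u 0, u 1, u 2, v 0, v 1, v 2, w 0, w 1, w 2, x 0, x 1, x 2, y 0, y 1, y 2, z 0, z 1, z 2]

section Net

variable {R S : Type*} [CommRing R] [CommRing S]

lemma net_eq_of_vecs (u v w x y z t : Fin 3 → R) :
    net ![u 0, u 1, u 2, v 0, v 1, v 2, w 0, w 1, w 2, x 0, x 1, x 2, y 0, y 1, y 2,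
      z 0, z 1, z 2] t
      = t 0 ^ 2 • u + t 1 ^ 2 • v + t 2 ^ 2 • w + (t 0 * t 1) • x + (t 0 * t 2) • y
        + (t 1 * t 2) • z := by
  ext i
  fin_cases i <;> simp [net] <;> ring

lemma net_mulVec (c : Fin 18 → R) (B : Matrix (Fin 3) (Fin 3) R) (t : Fin 3 → R) :
    net c (B.mulVec t) = t 0 ^ 2 • net c (B.col 0) + t 1 ^ 2 • net c (B.col 1)
      + t 2 ^ 2 • net c (B.col 2) + (t 0 * t 1) • netPolar c (B.col 0) (B.col 1)
      + (t 0 * t 2) • netPolar c (B.col 0) (B.col 2)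
      + (t 1 * t 2) • netPolar c (B.col 1) (B.col 2) := by
  ext i
  fin_cases i <;> simp [net, netPolar, Matrix.mulVec, dotProduct, Fin.sum_univ_three] <;> ring

lemma net_actCoeff (A B : Matrix (Fin 3) (Fin 3) R) (c : Fin 18 → R) (t : Fin 3 → R) :
    net (actCoeff A B c) t = A.transpose.mulVec (net c (B.mulVec t)) := by
  rw [net_mulVec, actCoeff, net_eq_of_vecs]
  simp only [Matrix.mulVec_add, Matrix.mulVec_smul]

lemma map_net (f : R →+* S) (c : Fin 18 → R) (t : Fin 3 → R) (i : Fin 3) :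
    f (net c t i) = net (f ∘ c) (f ∘ t) i := by
  fin_cases i <;> simp [net]

lemma map_net' (f : R →+* S) (c : Fin 18 → R) (t : Fin 3 → R) :
    f ∘ net c t = net (f ∘ c) (f ∘ t) := funext fun i => map_net f c t i

lemma map_netPolar (f : R →+* S) (c : Fin 18 → R) (s t : Fin 3 → R) :
    f ∘ netPolar c s t = netPolar (f ∘ c) (f ∘ s) (f ∘ t) := by
  ext i
  have h : (f ∘ (s + t) : Fin 3 → S) = f ∘ s + f ∘ t := by ext; simp
  simp [netPolar, map_net, h]

lemma map_actCoeff (f : R →+* S) (A B : Matrix (Fin 3) (Fin 3) R) (c : Fin 18 → R) (n : Fin 18) :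
    f (actCoeff A B c n) = actCoeff (A.map f) (B.map f) (f ∘ c) n := by
  have hcol (j : Fin 3) : (B.map f).col j = f ∘ B.col j := rfl
  have h (u : Fin 3 → R) (i : Fin 3) :
      f (A.transpose.mulVec u i) = (A.map f).transpose.mulVec (f ∘ u) i := by
    rw [RingHom.map_mulVec, Matrix.transpose_map]
  simp only [actCoeff, hcol, ← map_net', ← map_netPolar, ← h]
  fin_cases n <;> rfl

lemma net_injective : Function.Injective (net : (Fin 18 → R) → (Fin 3 → R) → Fin 3 → R) := by
  intro c c' h
  have h0 := fun i => congrFun (congrFun h ![1, 0, 0]) i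
  have h1 := fun i => congrFun (congrFun h ![0, 1, 0]) i
  have h2 := fun i => congrFun (congrFun h ![0, 0, 1]) i
  have h3 := fun i => congrFun (congrFun h ![1, 1, 0]) i
  have h4 := fun i => congrFun (congrFun h ![1, 0, 1]) i
  have h5 := fun i => congrFun (congrFun h ![0, 1, 1]) i
  simp [Fin.forall_fin_succ, net] at h0 h1 h2 h3 h4 h5
  ext n
  fin_cases n <;> simp <;> grind

end Net

section Valuative
universe u

lemma isIntegral_of_valuationSubring {R S : Type u} [CommRing R] [CommRing S] [IsNoetherianRing S]
    (φ : R →+* S)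
    (h : ∀ (K : Type u) [Field K] [IsAlgClosed K] (ψ : S →+* K) (O : ValuationSubring K),
      (∀ r, ψ (φ r) ∈ O) → ∀ s, ψ s ∈ O) : φ.IsIntegral := by
  intro s
  have key (P : Ideal S) (hP : P ∈ minimalPrimes S) :
      ∃ f : Polynomial R, f.Monic ∧ f.eval₂ φ s ∈ P := by
    have : P.IsPrime := hP.1.1
    let K := AlgebraicClosure (FractionRing (S ⧸ P))
    let ι : (S ⧸ P) →+* K := algebraMap (S ⧸ P) K
    have hι : Function.Injective ι := by
      have h₁ : Function.Injective (algebraMap (S ⧸ P) (FractionRing (S ⧸ P))) :=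
        IsFractionRing.injective _ _
      exact (algebraMap (FractionRing (S ⧸ P)) K).injective.comp h₁
    let ψ : S →+* K := ι.comp (Ideal.Quotient.mk P)
    have hmem : ψ s ∈ (integralClosure (Subring.closure (Set.range (ψ.comp φ))) K).toSubring := by
      rw [← iInf_valuationSubring_superset, Subring.mem_iInf]
      rintro ⟨V, hV⟩
      exact h K ψ V (fun r => hV ⟨r, rfl⟩) s
    have hcl : Subring.closure (Set.range (ψ.comp φ)) = (ψ.comp φ).range := by
      rw [← RingHom.coe_range, Subring.closure_eq]
    rw [hcl] at hmem
    obtain ⟨g, hg, hgs⟩ : IsIntegral (ψ.comp φ).range (ψ s) := hmem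
    obtain ⟨f, hf, -, hfm⟩ := Polynomial.lifts_and_natDegree_eq_and_monic
      (f := (ψ.comp φ).rangeRestrict) (p := g)
      (Polynomial.map_surjective _ (ψ.comp φ).rangeRestrict_surjective g) hg
    refine ⟨f, hfm, ?_⟩
    rw [← Ideal.Quotient.eq_zero_iff_mem]
    apply hι
    rw [map_zero, ← RingHom.comp_apply, Polynomial.hom_eval₂, ← hgs, ← hf, Polynomial.eval₂_map]
    rfl
  choose! f hfm hf using key
  have hfin : (minimalPrimes S).Finite := minimalPrimes.finite_of_isNoetherianRing S
  let F := ∏ P ∈ hfin.toFinset, f P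
  have hF : F.Monic := Polynomial.monic_prod_of_monic _ _ fun P hP => hfm P (by simpa using hP)
  have hnil : IsNilpotent (F.eval₂ φ s) := by
    rw [← mem_nilradical, nilradical, ← Ideal.sInf_minimalPrimes, Ideal.mem_sInf]
    intro P hP
    simp only [F, Polynomial.eval₂_finsetProd]
    exact Ideal.mem_of_dvd _ (Finset.dvd_prod_of_mem _ (by simpa using hP)) (hf P hP)
  obtain ⟨n, hn⟩ := hnil
  exact ⟨F ^ n, hF.pow n, by rw [Polynomial.eval₂_pow, hn]⟩

lemma isAlgClosed_residueField {K : Type*} [Field K] [IsAlgClosed K] (O : ValuationSubring K) :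
    IsAlgClosed (IsLocalRing.ResidueField O) := by
  refine IsAlgClosed.of_exists_root _ fun f hf hirr => ?_
  obtain ⟨g, hg, -, hgm⟩ := Polynomial.lifts_and_natDegree_eq_and_monic
    (f := IsLocalRing.residue O) (p := f)
    (Polynomial.map_surjective _ IsLocalRing.residue_surjective f) hf
  have hdeg : (g.map (algebraMap O K)).degree ≠ 0 := by
    rw [hgm.degree_map, ← hgm.degree_map (IsLocalRing.residue O), hg]
    exact hirr.degree_pos.ne'
  obtain ⟨x, hx⟩ := IsAlgClosed.exists_root _ hdeg
  have h_integral : IsIntegral O x := ⟨g, hgm, by simpa [Polynomial.IsRoot, Polynomial.eval_map] using hx⟩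
  obtain ⟨y, rfl⟩ := IsIntegrallyClosed.isIntegral_iff.mp h_integral
  refine ⟨IsLocalRing.residue O y, ?_⟩
  rw [← hg, Polynomial.eval_map, Polynomial.eval₂_at_apply]
  have : g.eval y = 0 := by
    apply IsFractionRing.injective O K
    rw [← Polynomial.eval₂_at_apply, map_zero, ← Polynomial.eval_map]
    exact hx
  rw [this, map_zero]

/-- A point of the source over a point in the closure of the image of an integral morphism. -/
lemma exists_algHom_comp_eq_of_isIntegral {L R S : Type*} [Field L] [IsAlgClosed L] [CommRing R]
    [CommRing S] [Algebra L R] [Algebra L S] (φ : R →ₐ[L] S) (hφ : φ.toRingHom.IsIntegral)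
    (ε : R →ₐ[L] L) (hε : ∀ r, φ r = 0 → ε r = 0) : ∃ ψ : S →ₐ[L] L, ψ.comp φ = ε := by
  have hεs : Function.Surjective ε := fun x => ⟨algebraMap L R x, by simp⟩
  have hmax : (RingHom.ker ε).IsMaximal := RingHom.ker_isMaximal_of_surjective ε.toRingHom hεs
  algebraize [φ.toRingHom]
  have hS : Algebra.IsIntegral R S := ⟨hφ⟩
  obtain ⟨Q, hQ, hQc⟩ := Ideal.exists_ideal_over_maximal_of_isIntegral (S := S) (RingHom.ker ε)
    (fun r hr => hε r hr)
  let _ : Field (S ⧸ Q) := Ideal.Quotient.field Q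
  have h_integral : Algebra.IsIntegral L (S ⧸ Q) := by
    refine ⟨fun x => ?_⟩
    obtain ⟨s, rfl⟩ := Ideal.Quotient.mk_surjective x
    obtain ⟨f, hf, hfs⟩ := hφ s
    refine ⟨f.map ε.toRingHom, hf.map _, ?_⟩
    have hcomp : (algebraMap L (S ⧸ Q)).comp ε.toRingHom
        = (Ideal.Quotient.mk Q).comp φ.toRingHom := by
      ext r
      have hr : r - algebraMap L R (ε r) ∈ Q.comap (algebraMap R S) := by
        rw [hQc]; simp [RingHom.mem_ker]
      have := Ideal.Quotient.eq_zero_iff_mem.mpr (Ideal.mem_comap.mp hr)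
      rw [map_sub, map_sub, sub_eq_zero] at this
      refine Eq.trans ?_ this.symm
      change _ = Ideal.Quotient.mk Q (φ (algebraMap L R (ε r)))
      rw [AlgHom.commutes]
      rfl
    rw [Polynomial.eval₂_map, hcomp, ← Polynomial.hom_eval₂, hfs, map_zero]
  have hbij := IsAlgClosed.algebraMap_bijective_of_isIntegral (k := L) (K := S ⧸ Q)
  let e : L ≃ₐ[L] (S ⧸ Q) := AlgEquiv.ofBijective (Algebra.ofId L (S ⧸ Q)) hbij
  refine ⟨e.symm.toAlgHom.comp (Ideal.Quotient.mkₐ L Q), ?_⟩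
  ext r
  change e.symm (Ideal.Quotient.mk Q (φ r)) = ε r
  rw [AlgEquiv.symm_apply_eq]
  have hr : r - algebraMap L R (ε r) ∈ Q.comap (algebraMap R S) := by
    rw [hQc]; simp [RingHom.mem_ker]
  have := Ideal.Quotient.eq_zero_iff_mem.mpr (Ideal.mem_comap.mp hr)
  rw [map_sub, map_sub, sub_eq_zero] at this
  refine Eq.trans this ?_
  change Ideal.Quotient.mk Q (φ (algebraMap L R (ε r))) = _
  rw [AlgHom.commutes]
  rfl

lemma finite_algHom_values_of_isIntegral {L R S : Type*} [Field L] [CommRing R]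
    [CommRing S] [Algebra L R] [Algebra L S] (φ : R →ₐ[L] S) (hφ : φ.toRingHom.IsIntegral)
    (ε : R →ₐ[L] L) (s : S) : {x : L | ∃ ψ : S →ₐ[L] L, ψ.comp φ = ε ∧ ψ s = x}.Finite := by
  obtain ⟨f, hf, hfs⟩ := hφ s
  refine ((f.map ε.toRingHom).rootSet_finite L).subset ?_
  rintro x ⟨ψ, rfl, rfl⟩
  rw [Polynomial.mem_rootSet]
  refine ⟨(hf.map _).ne_zero, ?_⟩
  have : ψ.toRingHom (f.eval₂ φ.toRingHom s) = 0 := by rw [hfs, map_zero]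
  rw [Polynomial.hom_eval₂] at this
  rw [Polynomial.aeval_def, Polynomial.eval₂_map]
  exact this

end Valuative

section SmithForm

variable {K : Type*} [Field K] (O : ValuationSubring K)

/-- Equivalence of `3 × 3` matrices under multiplication by `GL₃(O)` on both sides. -/
def IntegrallyEquivalent (M N : Matrix (Fin 3) (Fin 3) K) : Prop :=
  ∃ P Q : GL (Fin 3) O, M = P.1.map O.subtype * N * Q.1.map O.subtype

variable {O}

lemma IntegrallyEquivalent.trans {M N N' : Matrix (Fin 3) (Fin 3) K}
    (h : IntegrallyEquivalent O M N) (h' : IntegrallyEquivalent O N N') :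
    IntegrallyEquivalent O M N' := by
  obtain ⟨P, Q, rfl⟩ := h
  obtain ⟨P', Q', rfl⟩ := h'
  exact ⟨P * P', Q' * Q, by simp only [Units.val_mul, Matrix.map_mul, Matrix.mul_assoc]⟩

lemma IntegrallyEquivalent.of_isUnit_det {M N : Matrix (Fin 3) (Fin 3) K}
    (P Q : Matrix (Fin 3) (Fin 3) O) (hP : IsUnit P.det) (hQ : IsUnit Q.det)
    (h : M = P.map O.subtype * N * Q.map O.subtype) : IntegrallyEquivalent O M N :=
  ⟨.mk'' P hP, .mk'' Q hQ, h⟩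

lemma IntegrallyEquivalent.submatrix (M : Matrix (Fin 3) (Fin 3) K) (σ τ : Equiv.Perm (Fin 3)) :
    IntegrallyEquivalent O M (M.submatrix σ τ) := by
  have hmap (ρ : Equiv.Perm (Fin 3)) :
      (ρ.permMatrix O).map O.subtype = ρ.toPEquiv.toMatrix := by
    ext i j
    simp only [Equiv.Perm.permMatrix, Matrix.map_apply, PEquiv.toMatrix_apply]
    split_ifs <;> simp
  have hdet (ρ : Equiv.Perm (Fin 3)) : IsUnit (ρ.permMatrix O).det := by
    rw [Matrix.det_permutation]
    rcases Int.units_eq_one_or (Equiv.Perm.sign ρ) with h | h <;> simp [h]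
  refine .of_isUnit_det (σ⁻¹.permMatrix O) (τ.permMatrix O) (hdet _) (hdet _) ?_
  rw [hmap, hmap, PEquiv.toMatrix_toPEquiv_mul, PEquiv.mul_toMatrix_toPEquiv]
  ext i j
  simp

lemma exists_max_entry (v : K → O.ValueGroup) (M : Matrix (Fin 3) (Fin 3) K)
    (s : Finset (Fin 3)) (hs : s.Nonempty) :
    ∃ i ∈ s, ∃ j ∈ s, ∀ i' ∈ s, ∀ j' ∈ s, v (M i' j') ≤ v (M i j) := by
  obtain ⟨⟨i, j⟩, hij, hmax⟩ := (s ×ˢ s).exists_max_image (fun x => v (M x.1 x.2)) (hs.product hs)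
  rw [Finset.mem_product] at hij
  exact ⟨i, hij.1, j, hij.2, fun i' hi' j' hj' => hmax (i', j') (Finset.mk_mem_product hi' hj')⟩

/-- Elementary divisor theorem for `3 × 3` matrices over the fraction field of a valuation ring. -/
lemma exists_integrallyEquivalent_diagonal (M : Matrix (Fin 3) (Fin 3) K) :
    ∃ a : Fin 3 → K, O.valuation (a 1) ≤ O.valuation (a 0) ∧
      O.valuation (a 2) ≤ O.valuation (a 1) ∧ IntegrallyEquivalent O M (Matrix.diagonal a) := by
  obtain ⟨i, -, j, -, hmax⟩ := exists_max_entry O.valuation M Finset.univ Finset.univ_nonempty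
  let M₁ := M.submatrix (Equiv.swap 0 i) (Equiv.swap 0 j)
  have h₁ : IntegrallyEquivalent O M M₁ := .submatrix M _ _
  have hle (i' j' : Fin 3) : O.valuation (M₁ i' j') ≤ O.valuation (M₁ 0 0) := by
    simpa [M₁] using hmax _ (Finset.mem_univ _) _ (Finset.mem_univ _)
  generalize M₁ = N at h₁ hle
  obtain ⟨d, hd⟩ := (O.valuation_le_iff _ _).1 (hle 1 0)
  obtain ⟨g, hg⟩ := (O.valuation_le_iff _ _).1 (hle 2 0)
  obtain ⟨b, hb⟩ := (O.valuation_le_iff _ _).1 (hle 0 1)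
  obtain ⟨c, hc⟩ := (O.valuation_le_iff _ _).1 (hle 0 2)
  let N₂ : Matrix (Fin 3) (Fin 3) K :=
    !![N 0 0, 0, 0; 0, N 1 1 - d * N 0 1, N 1 2 - d * N 0 2;
      0, N 2 1 - g * N 0 1, N 2 2 - g * N 0 2]
  have h₂ : IntegrallyEquivalent O N N₂ := by
    refine .of_isUnit_det !![1, 0, 0; d, 1, 0; g, 0, 1] !![1, b, c; 0, 1, 0; 0, 0, 1]
      (by simp [Matrix.det_fin_three]) (by simp [Matrix.det_fin_three]) ?_
    ext i j
    fin_cases i <;> fin_cases j <;>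
      simp [N₂, Matrix.mul_apply, Fin.sum_univ_three, ← hd, ← hg, ← hb, ← hc] <;> ring
  have hsub (x : O) (i j k : Fin 3) :
      O.valuation (N i j - x * N 0 k) ≤ O.valuation (N 0 0) := by
    refine O.valuation.map_sub_le (hle _ _) ?_
    rw [map_mul]
    exact (mul_le_of_le_one_left' (O.valuation_le_one x)).trans (hle _ _)
  have hle₂ (i j : Fin 3) : O.valuation (N₂ i j) ≤ O.valuation (N₂ 0 0) := by
    fin_cases i <;> fin_cases j <;> simp [N₂, hsub]
  have hz (j : Fin 3) (hj : j ≠ 0) : N₂ 0 j = 0 ∧ N₂ j 0 = 0 := by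
    fin_cases j <;> simp [N₂] at hj ⊢
  replace h₂ := h₁.trans h₂
  generalize N₂ = N' at h₂ hle₂ hz
  obtain ⟨i, hi, j, hj, hmax⟩ := exists_max_entry O.valuation N' {1, 2} (by simp)
  let N₃ := N'.submatrix (Equiv.swap 1 i) (Equiv.swap 1 j)
  have h₃ : IntegrallyEquivalent O N' N₃ := .submatrix N' _ _
  have hzero (k : Fin 3) (hk : k ∈ ({1, 2} : Finset (Fin 3))) : Equiv.swap 1 k 0 = 0 := by
    fin_cases hk <;> decide
  have hne (k l : Fin 3) (hk : k ∈ ({1, 2} : Finset (Fin 3))) (hl : l ≠ 0) :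
      Equiv.swap 1 k l ∈ ({1, 2} : Finset (Fin 3)) := by
    revert k l; decide
  have hz₃ (k : Fin 3) (hk : k ≠ 0) : N₃ 0 k = 0 ∧ N₃ k 0 = 0 := by
    have h0 (l : Fin 3) (hl : l ∈ ({1, 2} : Finset (Fin 3))) : l ≠ 0 := by revert l; decide
    simp only [N₃, Matrix.submatrix_apply, hzero _ hi, hzero _ hj]
    exact ⟨(hz _ (h0 _ (hne j k hj hk))).1, (hz _ (h0 _ (hne i k hi hk))).2⟩
  have hle₃ (k l : Fin 3) (hk : k ≠ 0) (hl : l ≠ 0) :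
      O.valuation (N₃ k l) ≤ O.valuation (N₃ 1 1) := by
    simpa [N₃] using hmax _ (hne i k hi hk) _ (hne j l hj hl)
  have hle₃₀ : O.valuation (N₃ 1 1) ≤ O.valuation (N₃ 0 0) := by
    simpa [N₃, hzero _ hi, hzero _ hj] using hle₂ i j
  replace h₃ := h₂.trans h₃
  generalize N₃ = E at h₃ hz₃ hle₃ hle₃₀
  obtain ⟨h, hh⟩ := (O.valuation_le_iff _ _).1 (hle₃ 2 1 (by simp) (by simp))
  obtain ⟨f, hf⟩ := (O.valuation_le_iff _ _).1 (hle₃ 1 2 (by simp) (by simp))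
  refine ⟨![E 0 0, E 1 1, E 2 2 - h * E 1 2], hle₃₀, ?_, h₃.trans ?_⟩
  · refine O.valuation.map_sub_le (hle₃ _ _ (by simp) (by simp)) ?_
    rw [map_mul]
    exact (mul_le_of_le_one_left' (O.valuation_le_one h)).trans (hle₃ _ _ (by simp) (by simp))
  · refine .of_isUnit_det !![1, 0, 0; 0, 1, 0; 0, h, 1] !![1, 0, 0; 0, 1, f; 0, 0, 1]
      (by simp [Matrix.det_fin_three]) (by simp [Matrix.det_fin_three]) ?_
    have h10 := hz₃ 1 (by simp)
    have h20 := hz₃ 2 (by simp)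
    ext i j
    fin_cases i <;> fin_cases j <;>
      simp [Matrix.mul_apply, Fin.sum_univ_three, h10, h20, ← hh, ← hf] <;> ring

end SmithForm

section Residue

variable {k : Type*} [Field k]

/-- A net of conics without base points and without double lines. -/
def NonDegenerateNet (c : Fin 18 → k) : Prop :=
  (∀ t, net c t = 0 → t = 0) ∧
    ∀ x l : Fin 3 → k, (∀ t, x ⬝ᵥ net c t = (l ⬝ᵥ t) ^ 2) → x = 0

lemma NonDegenerateNet.actCoeff {c : Fin 18 → k} (hc : NonDegenerateNet c)
    (A B : Matrix (Fin 3) (Fin 3) k) (hA : IsUnit A.det) (hB : IsUnit B.det) :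
    NonDegenerateNet (actCoeff A B c) := by
  refine ⟨fun t ht => ?_, fun x l h => ?_⟩
  · rw [net_actCoeff] at ht
    have h₁ := hc.1 _ (Matrix.mulVec_injective_of_isUnit
      ((Matrix.isUnit_iff_isUnit_det _).2 (by rwa [Matrix.det_transpose]))
      (ht.trans (Matrix.mulVec_zero _).symm))
    exact Matrix.mulVec_injective_of_isUnit ((Matrix.isUnit_iff_isUnit_det _).2 hB)
      (h₁.trans (Matrix.mulVec_zero _).symm)
  · have h₁ : A.mulVec x = 0 := hc.2 _ (Matrix.vecMul l B⁻¹) fun t => by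
      have := h (B⁻¹.mulVec t)
      rw [net_actCoeff, Matrix.mulVec_mulVec, Matrix.mul_nonsing_inv _ hB, Matrix.one_mulVec,
        Matrix.dotProduct_mulVec, Matrix.vecMul_transpose, Matrix.dotProduct_mulVec] at this
      exact this
    exact Matrix.mulVec_injective_of_isUnit ((Matrix.isUnit_iff_isUnit_det _).2 hA)
      (h₁.trans (Matrix.mulVec_zero _).symm)

lemma NonDegenerateNet.not_base_point {c : Fin 18 → k} (hc : NonDegenerateNet c) :
    ¬ (c 0 = 0 ∧ c 1 = 0 ∧ c 2 = 0) := by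
  rintro ⟨h0, h1, h2⟩
  have := congrFun (hc.1 ![1, 0, 0] (by ext i; fin_cases i <;> simp [net, h0, h1, h2])) 0
  simp at this

variable [IsAlgClosed k]

lemma exists_binary_quadratic_root (a b c : k) :
    ∃ s t : k, (s ≠ 0 ∨ t ≠ 0) ∧ a * s ^ 2 + b * (s * t) + c * t ^ 2 = 0 := by
  by_cases ha : a = 0
  · exact ⟨1, 0, by simp, by simp [ha]⟩
  · have hdeg : (Polynomial.C a * Polynomial.X ^ 2 + Polynomial.C b * Polynomial.X
        + Polynomial.C c).degree ≠ 0 := by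
      rw [Polynomial.degree_quadratic ha]; decide
    obtain ⟨s, hs⟩ := IsAlgClosed.exists_root _ hdeg
    refine ⟨s, 1, by simp, ?_⟩
    simpa [Polynomial.IsRoot] using hs

/-- Every pencil of binary quadratic forms contains the square of a linear form. -/
lemma exists_square_in_pencil (a b c a' b' c' : k) :
    ∃ x y l m : k, (x ≠ 0 ∨ y ≠ 0) ∧ x * a + y * a' = l ^ 2 ∧ x * b + y * b' = 2 * (l * m) ∧
      x * c + y * c' = m ^ 2 := by
  obtain ⟨x, y, hxy, h⟩ := exists_binary_quadratic_root (b ^ 2 - 4 * a * c)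
    (2 * b * b' - 4 * (a * c' + a' * c)) (b' ^ 2 - 4 * a' * c')
  obtain ⟨l, hl⟩ := IsAlgClosed.exists_pow_nat_eq (x * a + y * a') (n := 2) (by simp)
  obtain ⟨m, hm⟩ := IsAlgClosed.exists_pow_nat_eq (x * c + y * c') (n := 2) (by simp)
  have hsq : (x * b + y * b') ^ 2 = (2 * (l * m)) ^ 2 := by
    rw [mul_pow, mul_pow, hl, hm]
    linear_combination h
  rcases sq_eq_sq_iff_eq_or_eq_neg.1 hsq with hb | hb
  · exact ⟨x, y, l, m, hxy, hl.symm, hb, hm.symm⟩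
  · exact ⟨x, y, l, -m, hxy, hl.symm, by rw [hb]; ring, by rw [← hm]; ring⟩

variable {c : Fin 18 → k}

lemma NonDegenerateNet.not_double_line (hc : NonDegenerateNet c) :
    ¬ (c 0 = 0 ∧ c 3 = 0 ∧ c 9 = 0 ∧ c 12 = 0 ∧ c 15 = 0) := by
  rintro ⟨h0, h3, h9, h12, h15⟩
  obtain ⟨l, hl⟩ := IsAlgClosed.exists_pow_nat_eq (c 6) (n := 2) (by simp)
  have := congrFun (hc.2 ![1, 0, 0] ![0, 0, l] fun t => by
    simp [net, dotProduct, Fin.sum_univ_three, h0, h3, h9, h12, h15, ← hl]; ring) 0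
  simp at this

lemma NonDegenerateNet.not_common_line (hc : NonDegenerateNet c) :
    ¬ (c 0 = 0 ∧ c 1 = 0 ∧ c 3 = 0 ∧ c 4 = 0 ∧ c 9 = 0 ∧ c 10 = 0) := by
  rintro ⟨h0, h1, h3, h4, h9, h10⟩
  obtain ⟨s, t, hst, h⟩ := exists_binary_quadratic_root (c 2) (c 11) (c 5)
  have := hc.1 ![s, t, 0] (by
    ext i; fin_cases i <;> simp [net, h0, h1, h3, h4, h9, h10]; linear_combination h)
  have hs := congrFun this 0
  have ht := congrFun this 1
  simp_all

lemma NonDegenerateNet.not_common_vertex (hc : NonDegenerateNet c) :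
    ¬ (c 0 = 0 ∧ c 1 = 0 ∧ c 9 = 0 ∧ c 10 = 0 ∧ c 12 = 0 ∧ c 13 = 0) := by
  rintro ⟨h0, h1, h9, h10, h12, h13⟩
  obtain ⟨x, y, l, m, hxy, ha, hb, hd⟩ :=
    exists_square_in_pencil (c 3) (c 15) (c 6) (c 4) (c 16) (c 7)
  have := hc.2 ![x, y, 0] ![0, l, m] fun t => by
    simp [net, dotProduct, Fin.sum_univ_three, h0, h1, h9, h10, h12, h13]
    linear_combination t 1 ^ 2 * ha + t 1 * t 2 * hb + t 2 ^ 2 * hd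
  have hx := congrFun this 0
  have hy := congrFun this 1
  simp_all

end Residue

section Examples

variable {k : Type*} [Field k]

/-- The coordinates of `X(T² + U²) + Y TW + Z(W² + TU)`. -/
def oddNet : Fin 18 → ℤ := ![1, 0, 0, 1, 0, 0, 0, 0, 1, 0, 0, 1, 0, 1, 0, 0, 0, 0]

/-- The coordinates of `X(U² + W² + TU) + Y(W² + TW) + Z(T² + UW)`. -/
def evenNet : Fin 18 → ℤ := ![0, 0, 1, 1, 0, 0, 1, 1, 0, 1, 0, 0, 0, 1, 0, 0, 0, 1]

lemma square_coeffs {R : Type*} [CommRing R] {c : Fin 18 → R} {x l : Fin 3 → R}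
    (h : ∀ t, x ⬝ᵥ net c t = (l ⬝ᵥ t) ^ 2) :
    (x 0 * c 0 + x 1 * c 1 + x 2 * c 2 = l 0 ^ 2 ∧ x 0 * c 3 + x 1 * c 4 + x 2 * c 5 = l 1 ^ 2 ∧
      x 0 * c 6 + x 1 * c 7 + x 2 * c 8 = l 2 ^ 2) ∧
    x 0 * c 9 + x 1 * c 10 + x 2 * c 11 = 2 * (l 0 * l 1) ∧
    x 0 * c 12 + x 1 * c 13 + x 2 * c 14 = 2 * (l 0 * l 2) ∧
    x 0 * c 15 + x 1 * c 16 + x 2 * c 17 = 2 * (l 1 * l 2) := by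
  have h0 := h ![1, 0, 0]
  have h1 := h ![0, 1, 0]
  have h2 := h ![0, 0, 1]
  have h3 := h ![1, 1, 0]
  have h4 := h ![1, 0, 1]
  have h5 := h ![0, 1, 1]
  simp [net, dotProduct, Fin.sum_univ_three] at h0 h1 h2 h3 h4 h5
  refine ⟨⟨h0, h1, h2⟩, ?_, ?_, ?_⟩
  · linear_combination h3 - h0 - h1
  · linear_combination h4 - h0 - h2
  · linear_combination h5 - h1 - h2

lemma nonDegenerateNet_oddNet (h2 : (2 : k) ≠ 0) :
    NonDegenerateNet fun n => (oddNet n : k) := by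
  refine ⟨fun t ht => ?_, fun x l h => ?_⟩
  · have e0 := congrFun ht 0
    have e1 := congrFun ht 1
    have e2 := congrFun ht 2
    simp [net, oddNet] at e0 e1 e2
    ext i
    fin_cases i <;> simp <;> grind
  · have := square_coeffs h
    simp [oddNet, h2] at this
    ext i
    fin_cases i <;> simp <;> grind

lemma nonDegenerateNet_evenNet (h2 : (2 : k) = 0) :
    NonDegenerateNet fun n => (evenNet n : k) := by
  refine ⟨fun t ht => ?_, fun x l h => ?_⟩
  · have e0 := congrFun ht 0
    have e1 := congrFun ht 1
    have e2 := congrFun ht 2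
    simp [net, evenNet] at e0 e1 e2
    ext i
    fin_cases i <;> simp <;> grind
  · have := square_coeffs h
    simp [evenNet, h2] at this
    ext i
    fin_cases i <;> simp [this.2]

end Examples

section ActCoeff

variable {R : Type*} [CommRing R]

lemma actCoeff_mul (A A' B B' : Matrix (Fin 3) (Fin 3) R) (c : Fin 18 → R) :
    actCoeff (A * A') (B * B') c = actCoeff A' B' (actCoeff A B c) := by
  apply net_injective
  ext1 t
  simp only [net_actCoeff, Matrix.transpose_mul, Matrix.mulVec_mulVec]

lemma actCoeff_one (c : Fin 18 → R) : actCoeff 1 1 c = c := by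
  apply net_injective
  ext1 t
  simp only [net_actCoeff, Matrix.transpose_one, Matrix.one_mulVec]

lemma actCoeff_diagonal (a b : Fin 3 → R) (c : Fin 18 → R) :
    actCoeff (Matrix.diagonal a) (Matrix.diagonal b) c =
      ![a 0 * (b 0 * b 0) * c 0, a 1 * (b 0 * b 0) * c 1, a 2 * (b 0 * b 0) * c 2,
        a 0 * (b 1 * b 1) * c 3, a 1 * (b 1 * b 1) * c 4, a 2 * (b 1 * b 1) * c 5,
        a 0 * (b 2 * b 2) * c 6, a 1 * (b 2 * b 2) * c 7, a 2 * (b 2 * b 2) * c 8,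
        a 0 * (b 0 * b 1) * c 9, a 1 * (b 0 * b 1) * c 10, a 2 * (b 0 * b 1) * c 11,
        a 0 * (b 0 * b 2) * c 12, a 1 * (b 0 * b 2) * c 13, a 2 * (b 0 * b 2) * c 14,
        a 0 * (b 1 * b 2) * c 15, a 1 * (b 1 * b 2) * c 16, a 2 * (b 1 * b 2) * c 17] := by
  apply net_injective
  ext t i
  rw [net_actCoeff, Matrix.diagonal_transpose, Matrix.mulVec_diagonal]
  fin_cases i <;> simp [net, Matrix.mulVec_diagonal] <;> ring

end ActCoeff

section Properness

/-- Weights of a one-parameter subgroup whose limit exists on a nondegenerate net are trivial. -/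
lemma le_one_of_weights {Γ : Type*} [LinearOrderedCommGroupWithZero Γ] {α β : Fin 3 → Γ}
    (hα : α 0 * α 1 * α 2 = 1) (hβ : β 0 * β 1 * β 2 = 1) (hα₁ : α 1 ≤ α 0) (hβ₁ : β 1 ≤ β 0)
    (hβ₂ : β 2 ≤ β 1) (h₁ : α 0 ≤ β 0) (h₂ : α 2 * (β 0 * β 0) ≤ 1)
    (h₃ : ¬ (1 < β 0 ∧ α 0 = β 0 ∧ α 1 = β 0 ∧ β 1 = β 0))
    (h₄ : ¬ (1 < β 0 ∧ α 0 = β 0 ∧ α 1 = β 0 ∧ 1 < β 0 * (β 0 * β 1) ∧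
      1 < β 0 * (β 0 * β 2))) :
    α 0 ≤ 1 ∧ β 0 ≤ 1 := by
  suffices β 0 ≤ 1 from ⟨h₁.trans this, this⟩
  by_contra! hlt
  have pos {x y z : Γ} (h : x * y * z = 1) : 0 < x ∧ 0 < y ∧ 0 < z := by
    refine ⟨?_, ?_, ?_⟩ <;> rw [zero_lt_iff] <;> rintro rfl <;> simp at h
  obtain ⟨ha0, ha1, ha2⟩ := pos hα
  obtain ⟨hb0, hb1, hb2⟩ := pos hβ
  have h₅ : β 0 * β 0 ≤ α 0 * α 1 := by
    have := mul_le_mul_right h₂ (α 0 * α 1)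
    rwa [← mul_assoc, hα, one_mul, mul_one] at this
  have h₆ : α 0 = β 0 := by
    refine h₁.antisymm ?_
    by_contra! h
    exact (h₅.trans (mul_le_mul' le_rfl (hα₁.trans h₁))).not_gt
      (mul_lt_mul_of_pos_right h hb0)
  have h₇ : α 1 = β 0 := by
    refine (hα₁.trans h₁).antisymm ?_
    rw [h₆] at h₅
    exact le_of_mul_le_mul_left h₅ hb0
  have h₈ : β 1 < β 0 := lt_of_le_of_ne hβ₁ fun h => h₃ ⟨hlt, h₆, h₇, h⟩
  refine h₄ ⟨hlt, h₆, h₇, ?_, ?_⟩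
  · by_contra! h
    have hb01 : β 0 * β 1 < 1 := by
      refine lt_of_lt_of_le ?_ h
      exact lt_mul_of_one_lt_left (mul_pos hb0 hb1) hlt
    have hb1' : β 1 < 1 := lt_of_le_of_lt (le_mul_of_one_le_left' hlt.le) hb01
    have := mul_lt_one_of_nonneg_of_lt_one_left (zero_le) hb01 (hβ₂.trans hb1'.le)
    exact this.ne hβ
  · by_contra! h
    have h₉ := mul_le_mul_left h (β 1)
    rw [show β 0 * (β 0 * β 2) * β 1 = β 0 * (β 0 * β 1 * β 2) by ac_rfl, hβ, mul_one,
      one_mul] at h₉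
    exact h₉.not_gt h₈

variable {K : Type*} [Field K] (O : ValuationSubring K)

lemma actCoeff_mem {A B : Matrix (Fin 3) (Fin 3) O} {c : Fin 18 → K} (hc : ∀ n, c n ∈ O)
    (n : Fin 18) : actCoeff (A.map O.subtype) (B.map O.subtype) c n ∈ O := by
  have h := map_actCoeff O.subtype A B (fun n => ⟨c n, hc n⟩) n
  have hc' : (O.subtype ∘ fun n => ⟨c n, hc n⟩) = c := rfl
  rw [hc'] at h
  rw [← h]
  exact Subtype.prop _

lemma valuation_det_map_GL (P : GL (Fin 3) O) : O.valuation (P.1.map O.subtype).det = 1 := by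
  have h : (P.1.map O.subtype).det = ((P.1.det : O) : K) := (O.subtype.map_det P.1).symm
  rw [h, ← O.valuation_eq_one_iff]
  exact (Matrix.isUnit_iff_isUnit_det _).1 P.isUnit

lemma mul_diagonal_mul_mem {P Q : Matrix (Fin 3) (Fin 3) O} {a : Fin 3 → K} (ha : ∀ i, a i ∈ O)
    (i j : Fin 3) : (P.map O.subtype * Matrix.diagonal a * Q.map O.subtype) i j ∈ O := by
  rw [Matrix.mul_apply]
  refine sum_mem fun k _ => mul_mem ?_ (Subtype.prop _)
  rw [Matrix.mul_diagonal]
  exact mul_mem (Subtype.prop _) (ha k)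

lemma valuation_prod_of_det {P Q : GL (Fin 3) O} {a : Fin 3 → K}
    (h : (P.1.map O.subtype * Matrix.diagonal a * Q.1.map O.subtype).det = 1) :
    O.valuation (a 0) * O.valuation (a 1) * O.valuation (a 2) = 1 := by
  have := congrArg O.valuation h
  rw [Matrix.det_mul, Matrix.det_mul, map_mul, map_mul, valuation_det_map_GL,
    valuation_det_map_GL, Matrix.det_diagonal, Fin.prod_univ_three] at this
  simpa using this

lemma residue_eq_zero_of_mul_mem {x : K} {y : O} (hx : 1 < O.valuation x) (h : x * y ∈ O) :
    IsLocalRing.residue O y = 0 := by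
  rw [IsLocalRing.residue_eq_zero_iff, O.valuation_lt_one_iff]
  rw [← O.valuation_le_one_iff, map_mul] at h
  by_contra! hy
  exact h.not_gt (hx.trans_le (le_mul_of_one_le_right' hy))

lemma mem_of_actCoeff_mem [IsAlgClosed K] {c : Fin 18 → ℤ}
    (hc : NonDegenerateNet fun n => (c n : IsLocalRing.ResidueField O))
    {A B : Matrix (Fin 3) (Fin 3) K} (hA : A.det = 1) (hB : B.det = 1)
    (h : ∀ n, actCoeff A B (fun n => (c n : K)) n ∈ O) :
    (∀ i j, A i j ∈ O) ∧ ∀ i j, B i j ∈ O := by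
  have := isAlgClosed_residueField O
  obtain ⟨a, ha₁, ha₂, P, Q, rfl⟩ := exists_integrallyEquivalent_diagonal (O := O) A
  obtain ⟨b, hb₁, hb₂, P', Q', rfl⟩ := exists_integrallyEquivalent_diagonal (O := O) B
  let c' : Fin 18 → O := actCoeff P.1 P'.1 fun n => (c n : O)
  have hc' : actCoeff (P.1.map O.subtype) (P'.1.map O.subtype) (fun n => (c n : K))
      = fun n => (c' n : K) := by
    ext n
    change _ = O.subtype (actCoeff P.1 P'.1 (fun n => (c n : O)) n)
    rw [map_actCoeff]
    congr 1
  have hnd : NonDegenerateNet fun n => IsLocalRing.residue O (c' n) := by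
    have hu (P : GL (Fin 3) O) : IsUnit (P.1.map (IsLocalRing.residue O)).det := by
      have := ((Matrix.isUnit_iff_isUnit_det _).1 P.isUnit).map (IsLocalRing.residue O)
      rwa [RingHom.map_det] at this
    convert hc.actCoeff _ _ (hu P) (hu P') using 1
    ext n
    simp only [c', map_actCoeff]
    congr 1
  have hdiag (n : Fin 18) : actCoeff (Matrix.diagonal a) (Matrix.diagonal b)
      (fun n => (c' n : K)) n ∈ O := by
    have hQ (Q : GL (Fin 3) O) : Q.1.map O.subtype * (Q⁻¹).1.map O.subtype = 1 := by
      rw [← Matrix.map_mul, ← Units.val_mul, mul_inv_cancel]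
      simp
    have h' := actCoeff_mem O (A := (Q⁻¹).1) (B := (Q'⁻¹).1) h n
    rw [actCoeff_mul, actCoeff_mul, hc', ← actCoeff_mul (Q.1.map O.subtype), hQ, hQ,
      actCoeff_one] at h'
    exact h'
  have hzero {i j k : Fin 3} {n : Fin 18}
      (hlt : 1 < O.valuation (a i) * (O.valuation (b j) * O.valuation (b k)))
      (hn : a i * (b j * b k) * c' n ∈ O) : IsLocalRing.residue O (c' n) = 0 :=
    residue_eq_zero_of_mul_mem O (by simpa using hlt) hn
  simp only [actCoeff_diagonal] at hdiag
  have hα := valuation_prod_of_det O hA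
  have hβ := valuation_prod_of_det O hB
  obtain ⟨h₁, h₂⟩ : O.valuation (a 0) ≤ 1 ∧ O.valuation (b 0) ≤ 1 := by
    refine le_one_of_weights (α := fun i => O.valuation (a i)) (β := fun i => O.valuation (b i))
      hα hβ ha₁ hb₁ hb₂ ?_ ?_ ?_ ?_
    · by_contra! hlt
      have hpos : 0 < O.valuation (b 1) * O.valuation (b 2) := by
        rw [zero_lt_iff]
        intro h0
        rw [mul_assoc, h0] at hβ
        simp at hβ
      have h12 : 1 < O.valuation (a 0) * (O.valuation (b 1) * O.valuation (b 2)) := by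
        rw [← hβ, mul_assoc]
        exact mul_lt_mul_of_pos_right hlt hpos
      exact hnd.not_double_line
        ⟨hzero (h12.trans_le (by gcongr; exact hb₂.trans hb₁)) (hdiag 0),
        hzero (h12.trans_le (by gcongr)) (hdiag 3),
        hzero (h12.trans_le (by gcongr)) (hdiag 9),
        hzero (h12.trans_le (by gcongr)) (hdiag 12), hzero h12 (hdiag 15)⟩
    · by_contra! hlt
      exact hnd.not_base_point
        ⟨hzero (hlt.trans_le (by gcongr; exact ha₂.trans ha₁)) (hdiag 0),
        hzero (hlt.trans_le (by gcongr)) (hdiag 1), hzero hlt (hdiag 2)⟩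
    · rintro ⟨hlt, h0, h1, h2⟩
      have hcube : 1 < O.valuation (b 0) * (O.valuation (b 0) * O.valuation (b 0)) :=
        one_lt_mul'' hlt (one_lt_mul'' hlt hlt)
      exact hnd.not_common_line
        ⟨hzero (by rwa [h0]) (hdiag 0), hzero (by rwa [h1]) (hdiag 1),
        hzero (by rwa [h0, h2]) (hdiag 3), hzero (by rwa [h1, h2]) (hdiag 4),
        hzero (by rwa [h0, h2]) (hdiag 9), hzero (by rwa [h1, h2]) (hdiag 10)⟩
    · rintro ⟨hlt, h0, h1, h01, h02⟩
      have hcube : 1 < O.valuation (b 0) * (O.valuation (b 0) * O.valuation (b 0)) :=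
        one_lt_mul'' hlt (one_lt_mul'' hlt hlt)
      exact hnd.not_common_vertex
        ⟨hzero (by rwa [h0]) (hdiag 0), hzero (by rwa [h1]) (hdiag 1),
        hzero (by rwa [h0]) (hdiag 9), hzero (by rwa [h1]) (hdiag 10),
        hzero (by rwa [h0]) (hdiag 12), hzero (by rwa [h1]) (hdiag 13)⟩
  have hmem {d : Fin 3 → K} (h₀ : O.valuation (d 0) ≤ 1)
      (h₁ : O.valuation (d 1) ≤ O.valuation (d 0)) (h₂ : O.valuation (d 2) ≤ O.valuation (d 1))
      (i : Fin 3) : d i ∈ O := by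
    rw [← O.valuation_le_one_iff]
    fin_cases i
    exacts [h₀, h₁.trans h₀, h₂.trans (h₁.trans h₀)]
  exact ⟨mul_diagonal_mul_mem O (hmem h₁ ha₁ ha₂), mul_diagonal_mul_mem O (hmem h₂ hb₁ hb₂)⟩

end Properness

section Orbit

lemma eval_toPoly3 {R : Type*} [CommRing R] (c : Fin 18 → R) (s : Fin 3 ⊕ Fin 3 → R) :
    MvPolynomial.eval s (toPoly3 c) = (s ∘ Sum.inl) ⬝ᵥ net c (s ∘ Sum.inr) := by
  simp [toPoly3, net, dotProduct, Fin.sum_univ_three]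
  ring

lemma toPoly3_injective {R : Type*} [CommRing R] :
    Function.Injective (toPoly3 : (Fin 18 → R) → MvPolynomial (Fin 3 ⊕ Fin 3) R) := by
  intro c c' h
  apply net_injective
  ext t i
  have := congrArg (MvPolynomial.eval (Sum.elim (Pi.single i 1) t)) h
  simpa [eval_toPoly3] using this

universe u

variable {L : Type u} [Field L]

lemma act3_toPoly3 [IsAlgClosed L]
    (g : Matrix.SpecialLinearGroup (Fin 3) L × Matrix.SpecialLinearGroup (Fin 3) L)
    (c : Fin 18 → L) :
    act3 g (toPoly3 c) = toPoly3 (actCoeff g.1.1 g.2.1 c) := by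
  have : Infinite L := IsAlgClosed.instInfinite
  apply MvPolynomial.funext
  intro s
  have h : (MvPolynomial.eval s (act3 g (toPoly3 c))) =
      MvPolynomial.eval (Sum.elim (g.1.1.mulVec (s ∘ Sum.inl)) (g.2.1.mulVec (s ∘ Sum.inr)))
        (toPoly3 c) := by
    simp [act3, toPoly3, Matrix.mulVec, dotProduct, Fin.sum_univ_three]
  rw [h, eval_toPoly3, eval_toPoly3, net_actCoeff, Matrix.dotProduct_mulVec,
    Matrix.vecMul_transpose]
  rfl

/-- The coordinate ring of `SL₃ × SL₃`. -/
abbrev SL3ProdRing (L : Type*) [Field L] : Type _ :=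
  MvPolynomial (Fin 2 × Fin 3 × Fin 3) L ⧸
    Ideal.span (Set.range fun n : Fin 2 =>
      (Matrix.of fun i j => (MvPolynomial.X (n, i, j) : MvPolynomial (Fin 2 × Fin 3 × Fin 3) L)).det
        - 1)

/-- The two universal matrices of determinant one. -/
noncomputable def genericMatrix (L : Type*) [Field L] (n : Fin 2) :
    Matrix (Fin 3) (Fin 3) (SL3ProdRing L) :=
  Matrix.of fun i j => Ideal.Quotient.mk _ (MvPolynomial.X (n, i, j))

lemma det_genericMatrix (L : Type*) [Field L] (n : Fin 2) : (genericMatrix L n).det = 1 := by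
  rw [← sub_eq_zero]
  have h := Ideal.Quotient.eq_zero_iff_mem.2 (Ideal.subset_span (Set.mem_range_self
    (f := fun n : Fin 2 => (Matrix.of fun i j =>
      (MvPolynomial.X (n, i, j) : MvPolynomial (Fin 2 × Fin 3 × Fin 3) L)).det - 1) n))
  rw [map_sub, map_one, RingHom.map_det] at h
  exact h

lemma det_map_genericMatrix {L K : Type*} [Field L] [CommRing K] (ψ : SL3ProdRing L →+* K)
    (n : Fin 2) : ((genericMatrix L n).map ψ).det = 1 := by
  have := ψ.map_det (genericMatrix L n)
  rw [det_genericMatrix, map_one] at this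
  exact this.symm

/-- The `L`-point of the coordinate ring attached to an element of `SL₃(L) × SL₃(L)`. -/
noncomputable def pointOfSL3Prod
    (g : Matrix.SpecialLinearGroup (Fin 3) L × Matrix.SpecialLinearGroup (Fin 3) L) :
    SL3ProdRing L →ₐ[L] L :=
  Ideal.Quotient.liftₐ _
    (MvPolynomial.aeval fun x : Fin 2 × Fin 3 × Fin 3 => (![g.1.1, g.2.1] x.1) x.2.1 x.2.2) <| by
    intro a ha
    refine RingHom.mem_ker.1 (Ideal.span_le.2 ?_ ha)
    rintro _ ⟨n, rfl⟩
    rw [SetLike.mem_coe, RingHom.mem_ker, map_sub, map_one, sub_eq_zero, AlgHom.map_det]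
    have : (AlgHom.mapMatrix (MvPolynomial.aeval fun x : Fin 2 × Fin 3 × Fin 3 =>
        (![g.1.1, g.2.1] x.1) x.2.1 x.2.2)) (Matrix.of fun i j =>
        (MvPolynomial.X (n, i, j) : MvPolynomial (Fin 2 × Fin 3 × Fin 3) L))
          = ![g.1.1, g.2.1] n := by
      ext i j; simp
    rw [this]
    fin_cases n
    exacts [g.1.2, g.2.2]

lemma genericMatrix_map_pointOfSL3Prod
    (g : Matrix.SpecialLinearGroup (Fin 3) L × Matrix.SpecialLinearGroup (Fin 3) L) (n : Fin 2) :
    (genericMatrix L n).map (pointOfSL3Prod g) = ![g.1.1, g.2.1] n := by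
  ext i j
  simp [genericMatrix, pointOfSL3Prod]

/-- The comorphism of the orbit map of the vector with coordinates `c`. -/
noncomputable def orbitComorphism (c : Fin 18 → L) :
    MvPolynomial (Fin 18) L →ₐ[L] SL3ProdRing L :=
  MvPolynomial.aeval (actCoeff (genericMatrix L 0) (genericMatrix L 1)
    fun n => algebraMap L (SL3ProdRing L) (c n))

lemma comp_orbitComorphism (ψ : SL3ProdRing L →ₐ[L] L) (c : Fin 18 → L) :
    ψ.comp (orbitComorphism c) = MvPolynomial.aeval
      (actCoeff ((genericMatrix L 0).map ψ) ((genericMatrix L 1).map ψ) c) := by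
  ext n
  simp only [orbitComorphism, AlgHom.comp_apply, MvPolynomial.aeval_X]
  refine (map_actCoeff ψ.toRingHom _ _ _ n).trans ?_
  congr 1
  ext n
  exact ψ.commutes (c n)

lemma subring_mem_of_genericMatrix {K : Type*} [Field K] (ψ : SL3ProdRing L →+* K)
    (O : Subring K) (hL : ∀ x, ψ (algebraMap L _ x) ∈ O)
    (h : ∀ n i j, ψ (genericMatrix L n i j) ∈ O) (s : SL3ProdRing L) : ψ s ∈ O := by
  obtain ⟨f, rfl⟩ := Ideal.Quotient.mk_surjective s
  induction f using MvPolynomial.induction_on with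
  | C a => exact hL a
  | add f g hf hg => rw [map_add, map_add]; exact add_mem hf hg
  | mul_X f x hf => rw [map_mul, map_mul]; exact mul_mem hf (h x.1 x.2.1 x.2.2)

lemma isIntegral_orbitComorphism (c : Fin 18 → ℤ)
    (hc : ∀ (k : Type u) [Field k] [Algebra L k], NonDegenerateNet fun n => (c n : k)) :
    (orbitComorphism fun n => (c n : L)).toRingHom.IsIntegral := by
  refine isIntegral_of_valuationSubring _ fun K _ _ ψ O h => ?_
  have hL (x : L) : ψ (algebraMap L _ x) ∈ O := by
    have := h (MvPolynomial.C x)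
    rwa [AlgHom.toRingHom_eq_coe, RingHom.coe_coe, ← MvPolynomial.algebraMap_eq,
      AlgHom.commutes] at this
  let _ : Algebra L (IsLocalRing.ResidueField O) := ((IsLocalRing.residue O).comp
    ((ψ.comp (algebraMap L _)).codRestrict O.toSubring hL)).toAlgebra
  obtain ⟨h₀, h₁⟩ := mem_of_actCoeff_mem O (hc (IsLocalRing.ResidueField O))
    (det_map_genericMatrix ψ 0) (det_map_genericMatrix ψ 1) fun n => by
      have := h (MvPolynomial.X n)
      rw [AlgHom.toRingHom_eq_coe, RingHom.coe_coe, orbitComorphism, MvPolynomial.aeval_X,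
        map_actCoeff] at this
      convert this using 2
      ext; simp
  refine subring_mem_of_genericMatrix ψ O.toSubring hL fun n i j => ?_
  fin_cases n
  exacts [h₀ i j, h₁ i j]

lemma stable3_of_isIntegral [IsAlgClosed L] {c : Fin 18 → L}
    (hc : (orbitComorphism c).toRingHom.IsIntegral) : Stable3 c := by
  simp only [Stable3, act3_toPoly3, toPoly3_injective.eq_iff]
  have hpt (g : Matrix.SpecialLinearGroup (Fin 3) L × Matrix.SpecialLinearGroup (Fin 3) L) :
      (pointOfSL3Prod g).comp (orbitComorphism c)
      = MvPolynomial.aeval (actCoeff g.1.1 g.2.1 c) := by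
    rw [comp_orbitComorphism, genericMatrix_map_pointOfSL3Prod, genericMatrix_map_pointOfSL3Prod]
    rfl
  constructor
  · refine ⟨{f | orbitComorphism c f = 0}, Set.ext fun c' => ⟨?_, fun h => ?_⟩⟩
    · rintro ⟨g, rfl⟩ f hf
      have := congrArg (fun φ => φ f) (hpt g)
      rw [AlgHom.comp_apply, hf, map_zero, MvPolynomial.aeval_eq_eval] at this
      exact this.symm
    · obtain ⟨ψ, hψ⟩ := exists_algHom_comp_eq_of_isIntegral (orbitComorphism c) hc
        (MvPolynomial.aeval c') fun f hf => by
          rw [MvPolynomial.aeval_eq_eval]; exact h f hf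
      refine ⟨⟨⟨_, det_map_genericMatrix ψ.toRingHom 0⟩, ⟨_, det_map_genericMatrix ψ.toRingHom 1⟩⟩,
        ?_⟩
      ext n
      rw [comp_orbitComorphism] at hψ
      have := congrArg (fun φ => φ (MvPolynomial.X n)) hψ
      simpa using this.symm
  · have hfin : (Set.univ.pi fun x : Fin 2 × Fin 3 × Fin 3 =>
        {y : L | ∃ ψ : SL3ProdRing L →ₐ[L] L, ψ.comp (orbitComorphism c) = MvPolynomial.aeval c ∧
          ψ (genericMatrix L x.1 x.2.1 x.2.2) = y}).Finite :=
      Set.Finite.pi fun x => finite_algHom_values_of_isIntegral _ hc (MvPolynomial.aeval c)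
        (genericMatrix L x.1 x.2.1 x.2.2)
    refine Set.Finite.of_finite_image (f := fun g x => (![g.1.1, g.2.1] x.1) x.2.1 x.2.2)
      (hfin.subset ?_) ?_
    · rintro _ ⟨g, hg, rfl⟩ x -
      refine ⟨pointOfSL3Prod g, (hpt g).trans (by rw [hg]), ?_⟩
      exact congrFun (congrFun (genericMatrix_map_pointOfSL3Prod g x.1) x.2.1) x.2.2
    · intro g _ g' _ h
      refine Prod.ext (Subtype.ext ?_) (Subtype.ext ?_) <;> ext i j
      · exact congrFun h (0, i, j)
      · exact congrFun h (1, i, j)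

end Orbit

/-
STATEMENT 4 (Corollary 3.5(1)): for every prime p and L an algebraic closure of 𝔽_p,
there is a stable vector in V₃ all of whose 18 coordinates lie in the prime subfield
𝔽_p (i.e. are images of integers).
-/
theorem exists_stable3_over_prime_field
    (p : ℕ) (hp : p.Prime)
    {L : Type*} [Field L] [IsAlgClosed L] [CharP L p] :
    ∃ c : Fin 18 → L, (∀ i, ∃ z : ℤ, c i = (z : L)) ∧ Stable3 c := by
  by_cases hp2 : p = 2
  · refine ⟨fun n => evenNet n, fun n => ⟨evenNet n, rfl⟩,
      stable3_of_isIntegral (isIntegral_orbitComorphism evenNet fun k _ _ => ?_)⟩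
    have : CharP k p := charP_of_injective_algebraMap (algebraMap L k).injective p
    subst hp2
    exact nonDegenerateNet_evenNet (CharTwo.two_eq_zero)
  · refine ⟨fun n => oddNet n, fun n => ⟨oddNet n, rfl⟩,
      stable3_of_isIntegral (isIntegral_orbitComorphism oddNet fun k _ _ => ?_)⟩
    have : CharP k p := charP_of_injective_algebraMap (algebraMap L k).injective p
    refine nonDegenerateNet_oddNet fun h => hp2 ?_
    have h' : ((2 : ℕ) : k) = 0 := by exact_mod_cast h
    exact (Nat.prime_dvd_prime_iff_eq hp Nat.prime_two).1 ((CharP.cast_eq_zero_iff k p 2).1 h')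
end

section
/- Let p be a prime and L an algebraic closure of 𝔽_p. For any c₁, c₂, c₃, c₄, c₅ ∈ Lˣ, the vector v = c₁·X T² + c₂·Y U² + c₃·Y W² + c₄·Z TU + c₅·X UW ∈ V₃ is stable for the action of SL₃(L)×SL₃(L) if and only if p ≠ 2. (Indeed Δ₃(v) = 4096 c₁⁶ c₂³ c₃⁹ c₄¹² c₅⁶.) -/
open Matrix

universe u

/-- The Gram matrix of the polar form of the dual cyclic vector, as a quadratic form in the second
group of variables, at the point `x` of the first. -/
def cyclicPencil {R : Type*} [CommRing R] (c₁ c₂ c₃ c₄ c₅ : R) (x : Fin 3 → R) :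
    Matrix (Fin 3) (Fin 3) R :=
  !![2 * c₁ * x 0, c₄ * x 2, 0;
     c₄ * x 2, 2 * c₂ * x 1, c₅ * x 0;
     0, c₅ * x 0, 2 * c₃ * x 1]

section Smooth

variable {k : Type*} [Field k] {c₁ c₂ c₃ c₄ c₅ : k}

lemma det_cyclicPencil {R : Type*} [CommRing R] (c₁ c₂ c₃ c₄ c₅ : R) (x : Fin 3 → R) :
    (cyclicPencil c₁ c₂ c₃ c₄ c₅ x).det =
      2 * (4 * c₁ * c₂ * c₃ * x 0 * x 1 ^ 2 - c₁ * c₅ ^ 2 * x 0 ^ 3 -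
        c₃ * c₄ ^ 2 * x 1 * x 2 ^ 2) := by
  simp [cyclicPencil, det_fin_three]; ring

lemma cyclicPencil_eq_zero_of_singular (h2 : (2 : k) ≠ 0) (h₁ : c₁ ≠ 0) (h₂ : c₂ ≠ 0) (h₃ : c₃ ≠ 0)
    (h₄ : c₄ ≠ 0) (h₅ : c₅ ≠ 0) (x : Fin 3 → k)
    (hdet : (cyclicPencil c₁ c₂ c₃ c₄ c₅ x).det = 0)
    (hgrad : ∀ d, ((cyclicPencil c₁ c₂ c₃ c₄ c₅ x).adjugate *
      cyclicPencil c₁ c₂ c₃ c₄ c₅ d).trace = 0) : x = 0 := by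
  rw [det_cyclicPencil] at hdet
  have hX := hgrad ![1, 0, 0]
  have hY := hgrad ![0, 1, 0]
  have hZ := hgrad ![0, 0, 1]
  simp [cyclicPencil, adjugate_fin_three, trace_fin_three] at hX hY hZ
  have hyz : x 1 * x 2 = 0 := by
    have : (c₃ * c₄ ^ 2 * 2 * 2) * (x 1 * x 2) = 0 := by linear_combination -hZ
    simpa [h2, h₃, h₄] using this
  have hx0 : x 1 = 0 → x 0 = 0 := by
    intro hy
    have : (2 * c₁ * c₅ ^ 2) * x 0 ^ 3 = 0 := by
      rw [hy] at hdet; linear_combination -hdet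
    simpa [h2, h₁, h₅] using this
  have hy0 : x 1 = 0 := by
    rcases mul_eq_zero.mp hyz with h | hz
    · exact h
    have hxy : x 0 * x 1 = 0 := by
      have : (2 * 2 * 2 * 2 * c₁ * c₂ * c₃) * (x 0 * x 1) = 0 := by
        rw [hz] at hY; linear_combination hY
      simpa [h2, h₁, h₂, h₃] using this
    rcases mul_eq_zero.mp hxy with h | h
    · have : (2 * 2 * 2 * c₁ * c₂ * c₃) * (x 1 ^ 2) = 0 := by
        rw [h] at hX; linear_combination hX
      simpa [h2, h₁, h₂, h₃] using this
    · exact h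
  have hx := hx0 hy0
  have hz : x 2 = 0 := by
    have : (2 * c₃ * c₄ ^ 2) * (x 2 ^ 2) = 0 := by
      rw [hx, hy0] at hY; linear_combination -hY
    simpa [h2, h₃, h₄] using this
  ext i; fin_cases i <;> simpa

lemma cyclicPencil_no_line (h2 : (2 : k) ≠ 0) (h₁ : c₁ ≠ 0) (h₃ : c₃ ≠ 0)
    (h₄ : c₄ ≠ 0) (h₅ : c₅ ≠ 0) (a b : Fin 3 → k) (hab : LinearIndependent k ![a, b])
    (hdet : ∀ s t : k, (cyclicPencil c₁ c₂ c₃ c₄ c₅ (s • a + t • b)).det = 0) : False := by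
  have hF : ∀ s t : k, 4 * c₁ * c₂ * c₃ * (s * a 0 + t * b 0) * (s * a 1 + t * b 1) ^ 2
      - c₁ * c₅ ^ 2 * (s * a 0 + t * b 0) ^ 3
      - c₃ * c₄ ^ 2 * (s * a 1 + t * b 1) * (s * a 2 + t * b 2) ^ 2 = 0 := by
    intro s t
    have := hdet s t
    rw [det_cyclicPencil] at this
    simpa [h2] using this
  rw [LinearIndependent.pair_iff] at hab
  have hzero : ∀ s t : k, s * a 1 + t * b 1 = 0 → s * a 0 + t * b 0 = 0 := by
    intro s t h
    have h' := hF s t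
    have : (c₁ * c₅ ^ 2) * (s * a 0 + t * b 0) ^ 3 = 0 := by
      rw [h] at h'; linear_combination -h'
    simpa [h₁, h₅] using this
  have hz : ∀ s t : k, s * a 1 + t * b 1 = 0 → s * a 2 + t * b 2 = 0 → s = 0 ∧ t = 0 := by
    intro s t h h'
    apply hab
    ext i; fin_cases i
    · simpa using hzero s t h
    · simpa using h
    · simpa using h'
  -- a vector of the plane with vanishing middle coordinate
  obtain ⟨s₀, t₀, hst, hne⟩ : ∃ s t : k, s * a 1 + t * b 1 = 0 ∧ s * a 2 + t * b 2 ≠ 0 := by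
    by_contra! hcon
    have h := hz _ _ (by ring) (hcon (b 1) (-a 1) (by ring))
    have h' := hz 1 0 (by simpa using h.2) (hcon 1 0 (by simpa using h.2))
    exact one_ne_zero h'.1
  have hmid : ∀ s t : k, s * a 1 + t * b 1 = 0 := by
    intro s t
    set u := s * a 1 + t * b 1 with hu
    have e1 := hF s t
    have e2 := hF (s + s₀) (t + t₀)
    have e3 := hF (s - s₀) (t - t₀)
    have h0 := hzero _ _ hst
    have r1 : (s + s₀) * a 1 + (t + t₀) * b 1 = u := by linear_combination hst
    have r2 : (s - s₀) * a 1 + (t - t₀) * b 1 = u := by linear_combination -hst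
    have r3 : (s + s₀) * a 0 + (t + t₀) * b 0 = s * a 0 + t * b 0 := by linear_combination h0
    have r4 : (s - s₀) * a 0 + (t - t₀) * b 0 = s * a 0 + t * b 0 := by linear_combination -h0
    rw [r1, r3] at e2
    rw [r2, r4] at e3
    have : (2 * c₃ * c₄ ^ 2 * (s₀ * a 2 + t₀ * b 2) ^ 2) * u = 0 := by
      linear_combination 2 * e1 - e2 - e3
    simpa [h2, h₃, h₄, hne] using this
  -- every combination has vanishing first two coordinates
  have h := hz (b 2) (-a 2) (hmid _ _) (by ring)
  have h' := hz 1 0 (hmid _ _) (by simpa using h.2)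
  exact one_ne_zero h'.1

end Smooth

/-- Two weakly decreasing weight vectors with zero sums that do not both vanish make one of four
families of weights of the representation positive. -/
lemma destabilizing_weights {Γ : Type*} [AddCommGroup Γ] [LinearOrder Γ] [IsOrderedAddMonoid Γ]
    (a b : Fin 3 → Γ) (ha : a 0 + a 1 + a 2 = 0) (hb : b 0 + b 1 + b 2 = 0)
    (ha₁ : a 1 ≤ a 0) (ha₂ : a 2 ≤ a 1) (hb₁ : b 1 ≤ b 0) (hb₂ : b 2 ≤ b 1) :
    (a = 0 ∧ b = 0) ∨
    (0 < a 0 + b 0 + b 0 ∧ 0 < a 0 + b 0 + b 1 ∧ 0 < a 0 + b 0 + b 2 ∧ 0 < a 0 + b 1 + b 1 ∧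
      0 < a 0 + b 1 + b 2) ∨
    ((∀ i, 0 < a i + b 0 + b 0) ∧ 0 < a 0 + b 0 + b 1 ∧ 0 < a 0 + b 0 + b 2) ∨
    (0 < a 0 + b 0 + b 0 ∧ 0 < a 1 + b 0 + b 0 ∧ 0 < a 0 + b 0 + b 1 ∧ 0 < a 1 + b 0 + b 1 ∧
      ((0 < a 0 + b 0 + b 2 ∧ 0 < a 1 + b 0 + b 2) ∨
        (0 < a 0 + b 1 + b 1 ∧ 0 < a 1 + b 1 + b 1))) ∨
    ((∀ i, 0 < a i + b 0 + b 0) ∧ ∀ i, 0 < a i + b 0 + b 1) := by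
  have cases : (a 0 = 0 ∧ a 1 = 0 ∧ a 2 = 0 ∧ b 0 = 0 ∧ b 1 = 0 ∧ b 2 = 0) ∨
      0 < a 0 + b 1 + b 2 ∨
      (0 < a 2 + b 0 + b 0 ∧ 0 < a 0 + b 0 + b 2) ∨
      (0 < a 1 + b 0 + b 1 ∧ (0 < a 1 + b 0 + b 2 ∨ 0 < a 1 + b 1 + b 1)) ∨
      0 < a 2 + b 0 + b 1 := by
    grind
  simp only [funext_iff, Fin.forall_fin_succ, Fin.succ_zero_eq_one,
    Fin.succ_one_eq_two, IsEmpty.forall_iff, and_true, Pi.zero_apply]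
  rcases cases with h | h | ⟨h, h'⟩ | ⟨h, h' | h'⟩ | h
  · grind
  · right; left; grind
  · right; right; left; grind
  · right; right; right; left; grind
  · right; right; right; left; grind
  · right; right; right; right; grind

/-- A net of ternary quadratic forms, given by symmetric matrices, whose discriminant cubic has no
singular point and does not vanish identically on the line `x 2 = 0`. -/
structure IsSmoothNet {k : Type*} [Field k] (w : Fin 3 → Matrix (Fin 3) (Fin 3) k) : Prop where
  isSymm : ∀ i, (w i).IsSymm
  eq_zero_of_singular : ∀ x : Fin 3 → k, (∑ i, x i • w i).det = 0 →
    (∀ d, ((∑ i, x i • w i).adjugate * w d).trace = 0) → x = 0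
  exists_det_ne_zero : ∃ x : Fin 3 → k, x 2 = 0 ∧ (∑ i, x i • w i).det ≠ 0

namespace IsSmoothNet

variable {k : Type*} [Field k] {w : Fin 3 → Matrix (Fin 3) (Fin 3) k}

lemma eq_zero_of_row_eq_zero (hw : IsSmoothNet w) (h00 : ∀ i, w i 0 0 = 0) (x : Fin 3 → k)
    (h1 : (∑ i, x i • w i) 0 1 = 0) (h2 : (∑ i, x i • w i) 0 2 = 0) : x = 0 := by
  have hs : (∑ i, x i • w i).IsSymm := by
    simp [Matrix.IsSymm, transpose_sum, (hw.isSymm _).eq]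
  have h0 : (∑ i, x i • w i) 0 0 = 0 := by simp [Matrix.sum_apply, h00]
  have h1' : (∑ i, x i • w i) 1 0 = 0 := by rw [hs.apply]; exact h1
  have h2' : (∑ i, x i • w i) 2 0 = 0 := by rw [hs.apply]; exact h2
  refine hw.eq_zero_of_singular x ?_ fun d ↦ ?_
  · rw [det_fin_three, h0, h1, h2]; ring
  · rw [adjugate_fin_three, h0, h1, h2, h1', h2']
    simp [trace_fin_three, vecMul, vecHead, h00 d]

lemma not_rank_le_one (hw : IsSmoothNet w) (h00 : w 0 0 0 = 0) (h01 : w 0 0 1 = 0)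
    (h02 : w 0 0 2 = 0) (h11 : w 0 1 1 = 0) (h12 : w 0 1 2 = 0) : False := by
  have h10 : w 0 1 0 = 0 := by rw [(hw.isSymm 0).apply]; exact h01
  have h20 : w 0 2 0 = 0 := by rw [(hw.isSymm 0).apply]; exact h02
  have h21 : w 0 2 1 = 0 := by rw [(hw.isSymm 0).apply]; exact h12
  have := hw.eq_zero_of_singular ![1, 0, 0] (by simp [Fin.sum_univ_three, det_fin_three, *])
    fun d ↦ by simp [Fin.sum_univ_three, adjugate_fin_three, trace_fin_three, vecMul, *]
  simpa using congrFun this 0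

lemma not_singular_basePoint (hw : IsSmoothNet w) (h00 : ∀ i, w i 0 0 = 0) (h01 : w 0 0 1 = 0)
    (h02 : w 0 0 2 = 0) : False := by
  have := hw.eq_zero_of_row_eq_zero h00 ![1, 0, 0] (by simp [Fin.sum_univ_three, h01])
    (by simp [Fin.sum_univ_three, h02])
  simpa using congrFun this 0

lemma not_common_tangent (hw : IsSmoothNet w) (h00 : ∀ i, w i 0 0 = 0) (h01 : ∀ i, w i 0 1 = 0) :
    False := by
  have key : ∀ s t : k, s * w 0 0 2 + t * w 1 0 2 = 0 → s = 0 ∧ t = 0 := by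
    intro s t h
    have := hw.eq_zero_of_row_eq_zero h00 ![s, t, 0] (by simp [Fin.sum_univ_three, h01])
      (by simpa [Fin.sum_univ_three] using h)
    exact ⟨by simpa using congrFun this 0, by simpa using congrFun this 1⟩
  have h := key (w 1 0 2) (-w 0 0 2) (by ring)
  exact one_ne_zero (key 1 0 (by simpa using h.2)).1

lemma not_degenerate_pencil (hw : IsSmoothNet w) (h00 : w 0 0 0 = 0) (h00' : w 1 0 0 = 0)
    (h01 : w 0 0 1 = 0) (h01' : w 1 0 1 = 0)
    (h : (w 0 0 2 = 0 ∧ w 1 0 2 = 0) ∨ (w 0 1 1 = 0 ∧ w 1 1 1 = 0)) : False := by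
  obtain ⟨x, hx, hne⟩ := hw.exists_det_ne_zero
  have h10 : w 0 1 0 = 0 := by rw [(hw.isSymm 0).apply]; exact h01
  have h10' : w 1 1 0 = 0 := by rw [(hw.isSymm 1).apply]; exact h01'
  apply hne
  rcases h with ⟨h, h'⟩ | ⟨h, h'⟩ <;>
    simp [Fin.sum_univ_three, det_fin_three, *]

end IsSmoothNet

lemma cyclicPencil_sum {R : Type*} [CommRing R] (c₁ c₂ c₃ c₄ c₅ : R)
    (P : Matrix (Fin 3) (Fin 3) R) (x : Fin 3 → R) :
    cyclicPencil c₁ c₂ c₃ c₄ c₅ (P *ᵥ x) = ∑ i, x i • cyclicPencil c₁ c₂ c₃ c₄ c₅ (P.col i) := by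
  ext i j
  fin_cases i <;> fin_cases j <;>
    simp [cyclicPencil, Fin.sum_univ_three, mulVec, dotProduct] <;> ring

lemma cyclicPencil_isSymm {R : Type*} [CommRing R] (c₁ c₂ c₃ c₄ c₅ : R) (x : Fin 3 → R) :
    (cyclicPencil c₁ c₂ c₃ c₄ c₅ x).IsSymm := by
  ext i j
  fin_cases i <;> fin_cases j <;> simp [cyclicPencil]

lemma isSmoothNet_cyclic {k : Type*} [Field k] {c₁ c₂ c₃ c₄ c₅ : k}
    (h2 : (2 : k) ≠ 0) (h₁ : c₁ ≠ 0) (h₂ : c₂ ≠ 0) (h₃ : c₃ ≠ 0)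
    (h₄ : c₄ ≠ 0) (h₅ : c₅ ≠ 0) (P Q : Matrix (Fin 3) (Fin 3) k) (hP : P.det ≠ 0)
    (hQ : Q.det ≠ 0) :
    IsSmoothNet fun i ↦ Qᵀ * cyclicPencil c₁ c₂ c₃ c₄ c₅ (P.col i) * Q := by
  have hsum : ∀ x : Fin 3 → k, ∑ i, x i • (Qᵀ * cyclicPencil c₁ c₂ c₃ c₄ c₅ (P.col i) * Q) =
      Qᵀ * cyclicPencil c₁ c₂ c₃ c₄ c₅ (P *ᵥ x) * Q := by
    intro x
    simp [cyclicPencil_sum, Finset.mul_sum, Finset.sum_mul]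
  refine ⟨fun i ↦ ?_, fun x hx hd ↦ ?_, ?_⟩
  · simp [Matrix.IsSymm, Matrix.mul_assoc, (cyclicPencil_isSymm c₁ c₂ c₃ c₄ c₅ _).eq]
  · rw [hsum] at hx hd
    have hPx : P *ᵥ x = 0 := by
      refine cyclicPencil_eq_zero_of_singular h2 h₁ h₂ h₃ h₄ h₅ _ (by simpa [hQ] using hx) ?_
      intro d
      obtain ⟨e, rfl⟩ : ∃ e, P *ᵥ e = d :=
        ⟨P⁻¹ *ᵥ d, by simp [mulVec_mulVec, Matrix.mul_nonsing_inv _ hP.isUnit]⟩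
      have h : ∑ i, e i * ((Qᵀ * cyclicPencil c₁ c₂ c₃ c₄ c₅ (P *ᵥ x) * Q).adjugate *
          (Qᵀ * cyclicPencil c₁ c₂ c₃ c₄ c₅ (P.col i) * Q)).trace = 0 := by simp [hd]
      have h' : ((Qᵀ * cyclicPencil c₁ c₂ c₃ c₄ c₅ (P *ᵥ x) * Q).adjugate *
          (Qᵀ * cyclicPencil c₁ c₂ c₃ c₄ c₅ (P *ᵥ e) * Q)).trace = 0 := by
        rw [← hsum e, ← h]
        simp [Finset.mul_sum, trace_sum]
      have hQQ : Q * Q.adjugate = Q.det • 1 := mul_adjugate Q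
      have hQQ' : Qᵀ.adjugate * Qᵀ = Q.det • 1 := by rw [adjugate_mul, det_transpose]
      have e1 : ((Qᵀ * cyclicPencil c₁ c₂ c₃ c₄ c₅ (P *ᵥ x) * Q).adjugate *
          (Qᵀ * cyclicPencil c₁ c₂ c₃ c₄ c₅ (P *ᵥ e) * Q)).trace = Q.det * (Q.det *
          ((cyclicPencil c₁ c₂ c₃ c₄ c₅ (P *ᵥ x)).adjugate *
          (cyclicPencil c₁ c₂ c₃ c₄ c₅ (P *ᵥ e))).trace) := by
        rw [← Matrix.mul_assoc, trace_mul_comm, adjugate_mul_distrib, adjugate_mul_distrib]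
        simp only [← Matrix.mul_assoc, hQQ]
        simp only [Matrix.mul_assoc, hQQ']
        simp
      rw [e1] at h'
      simpa [hQ] using h'
    exact eq_zero_of_mulVec_eq_zero hP hPx
  · by_contra! hcon
    have hli : LinearIndependent k P.col := by
      rw [linearIndependent_cols_iff_isUnit]
      exact (isUnit_iff_isUnit_det _).mpr hP.isUnit
    refine cyclicPencil_no_line h2 h₁ h₃ h₄ h₅ (c₂ := c₂) (P.col 0) (P.col 1) ?_ fun s t ↦ ?_
    · convert hli.comp ![0, 1] (by decide) using 1
      ext i; fin_cases i <;> rfl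
    · have := hcon ![s, t, 0] (by simp)
      rw [hsum] at this
      have e : P *ᵥ ![s, t, 0] = s • P.col 0 + t • P.col 1 := by
        ext i; simp [mulVec, dotProduct, Fin.sum_univ_three]; ring
      simpa [hQ, e] using this

/-- Smith normal form over a valuation ring. -/
lemma ValuationSubring.exists_smith {K : Type*} [Field K] (A : ValuationSubring K) (n : ℕ) :
    ∀ M : Matrix (Fin n) (Fin n) K, ∃ (P Q : Matrix (Fin n) (Fin n) A) (t : Fin n → K),
      IsUnit P.det ∧ IsUnit Q.det ∧ M = P.map A.subtype * diagonal t * Q.map A.subtype := by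
  induction n with
  | zero => exact fun M ↦ ⟨1, 1, 0, by simp, by simp, Subsingleton.elim _ _⟩
  | succ n ih =>
    intro M
    by_cases hM : M = 0
    · exact ⟨1, 1, 0, by simp, by simp, by simp [hM]⟩
    obtain ⟨⟨i₀, j₀⟩, -, hmax⟩ := Finset.exists_max_image Finset.univ
      (fun ij : Fin (n + 1) × Fin (n + 1) ↦ A.valuation (M ij.1 ij.2)) Finset.univ_nonempty
    have hpiv : M i₀ j₀ ≠ 0 := by
      intro h0
      apply hM
      ext i j
      have := hmax (i, j) (Finset.mem_univ _)
      simpa [h0] using this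
    have hdiv : ∀ i j, ∃ a : A, (a : K) * M i₀ j₀ = M i j := fun i j ↦
      (A.valuation_le_iff _ _).mp (hmax (i, j) (Finset.mem_univ _))
    choose q hq using hdiv
    -- the matrix with its pivot moved to the last corner
    obtain ⟨e, he⟩ : ∃ e : Fin n ⊕ Unit ≃ Fin (n + 1), e (Sum.inr ()) = i₀ :=
      ⟨(Fintype.equivOfCardEq (by simp)).trans (Equiv.swap _ i₀), Equiv.swap_apply_left _ _⟩
    obtain ⟨f, hf⟩ : ∃ f : Fin n ⊕ Unit ≃ Fin (n + 1), f (Sum.inr ()) = j₀ :=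
      ⟨(Fintype.equivOfCardEq (by simp)).trans (Equiv.swap _ j₀), Equiv.swap_apply_left _ _⟩
    set d := M i₀ j₀ with hd
    let N : Matrix (Fin n) (Fin n) K := of fun i j ↦
      M (e (Sum.inl i)) (f (Sum.inl j)) - q (e (Sum.inl i)) j₀ * d * q i₀ (f (Sum.inl j))
    obtain ⟨P, Q, t, hP, hQ, hN⟩ := ih N
    let P₁ : Matrix (Fin n ⊕ Unit) (Fin n ⊕ Unit) A :=
      fromBlocks P (of fun i _ ↦ q (e (Sum.inl i)) j₀) 0 1
    let Q₁ : Matrix (Fin n ⊕ Unit) (Fin n ⊕ Unit) A :=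
      fromBlocks Q 0 (of fun _ j ↦ q i₀ (f (Sum.inl j))) 1
    have hMs : M.submatrix e f = P₁.map A.subtype * diagonal (Sum.elim t fun _ ↦ d) *
        Q₁.map A.subtype := by
      have hdg : diagonal (Sum.elim t fun _ ↦ d) =
          fromBlocks (diagonal t) 0 0 (diagonal fun _ : Unit ↦ d) := by
        rw [fromBlocks_diagonal]
      rw [hdg]
      simp only [P₁, Q₁]
      rw [fromBlocks_map, fromBlocks_map, fromBlocks_multiply, fromBlocks_multiply]
      ext (i | i) (j | j)
      · have h1 := congrFun (congrFun hN i) j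
        simp only [N, of_apply, ValuationSubring.coe_subtype] at h1
        simp [Matrix.mul_apply (m := Unit)]
        simp only [Matrix.mul_assoc] at h1 ⊢
        linear_combination h1
      · have h1 := hq (e (Sum.inl i)) j₀
        simp [Matrix.mul_apply, hf, h1]
      · have h1 := hq i₀ (f (Sum.inl j))
        simp [Matrix.mul_apply, he, ← h1, mul_comm]
      · simp [he, hf, hd]
    refine ⟨P₁.submatrix e.symm f.symm, Q₁.submatrix f.symm f.symm, (Sum.elim t fun _ ↦ d) ∘ f.symm,
      ?_, ?_, ?_⟩
    · rw [← isUnit_iff_isUnit_det, isUnit_submatrix_equiv, isUnit_iff_isUnit_det]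
      simpa only [P₁, det_fromBlocks_zero₂₁, det_one, mul_one] using hP
    · rw [← isUnit_iff_isUnit_det, isUnit_submatrix_equiv, isUnit_iff_isUnit_det]
      simpa only [Q₁, det_fromBlocks_zero₁₂, det_one, mul_one] using hQ
    · have h := congrArg (fun X ↦ X.submatrix e.symm f.symm) hMs
      rw [show (M.submatrix e f).submatrix e.symm f.symm = M by ext; simp] at h
      rw [h, ← submatrix_mul_equiv _ _ _ f.symm, ← submatrix_mul_equiv _ _ _ f.symm]
      simp [submatrix_map]

lemma isUnit_weights_of_isSmoothNet {K : Type*} [Field K] (A : ValuationSubring K)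
    (U : Fin 3 → Matrix (Fin 3) (Fin 3) A) (t s : Fin 3 → K)
    (ht : A.valuation (∏ i, t i) = 1) (hs : A.valuation (∏ i, s i) = 1)
    (hint : ∀ i j k, t i * s j * s k * U i j k ∈ A)
    (hU : ∀ σ τ : Equiv.Perm (Fin 3), IsSmoothNet fun i ↦
      ((U (σ i)).submatrix τ τ).map (IsLocalRing.residue A)) :
    (∀ i, t i ∈ A) ∧ ∀ i, s i ∈ A := by
  have ht0 : ∀ i, A.valuation (t i) ≠ 0 := fun i h ↦ by
    rw [map_prod, Finset.prod_eq_zero (Finset.mem_univ i) h] at ht; exact zero_ne_one ht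
  have hs0 : ∀ i, A.valuation (s i) ≠ 0 := fun i h ↦ by
    rw [map_prod, Finset.prod_eq_zero (Finset.mem_univ i) h] at hs; exact zero_ne_one hs
  let α : Fin 3 → Additive (A.ValueGroup)ˣ := fun i ↦ Additive.ofMul (Units.mk0 _ (ht0 i))
  let β : Fin 3 → Additive (A.ValueGroup)ˣ := fun i ↦ Additive.ofMul (Units.mk0 _ (hs0 i))
  have hα : ∀ σ : Equiv.Perm (Fin 3), α (σ 0) + α (σ 1) + α (σ 2) = 0 := by
    intro σ
    rw [← Fin.sum_univ_three (fun i ↦ α (σ i)), Equiv.sum_comp σ α, Fin.sum_univ_three]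
    apply Additive.toMul.injective
    apply Units.ext
    simpa [α, Fin.prod_univ_three] using ht
  have hβ : ∀ σ : Equiv.Perm (Fin 3), β (σ 0) + β (σ 1) + β (σ 2) = 0 := by
    intro σ
    rw [← Fin.sum_univ_three (fun i ↦ β (σ i)), Equiv.sum_comp σ β, Fin.sum_univ_three]
    apply Additive.toMul.injective
    apply Units.ext
    simpa [β, Fin.prod_univ_three] using hs
  have hvan : ∀ i j k, 0 < α i + β j + β k → IsLocalRing.residue A (U i j k) = 0 := by
    intro i j k h
    have h1 : 1 < A.valuation (t i) * A.valuation (s j) * A.valuation (s k) := h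
    have h2 := (A.valuation_le_one_iff _).mpr (hint i j k)
    rw [IsLocalRing.residue_eq_zero_iff, A.valuation_lt_one_iff]
    by_contra! h3
    simp only [map_mul] at h2
    exact absurd (h1.trans_le (le_mul_of_one_le_right' h3)) h2.not_gt
  set σ := Tuple.sort fun i ↦ -α i
  set τ := Tuple.sort fun i ↦ -β i
  have hσ : ∀ i j, i ≤ j → α (σ j) ≤ α (σ i) := fun i j hij ↦
    neg_le_neg_iff.mp (Tuple.monotone_sort (fun i ↦ -α i) hij)
  have hτ : ∀ i j, i ≤ j → β (τ j) ≤ β (τ i) := fun i j hij ↦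
    neg_le_neg_iff.mp (Tuple.monotone_sort (fun i ↦ -β i) hij)
  have a01 := hσ 0 1 (by decide)
  have a12 := hσ 1 2 (by decide)
  have b01 := hτ 0 1 (by decide)
  have b12 := hτ 1 2 (by decide)
  have hw := hU σ τ
  have hv : ∀ i j k, 0 < α (σ i) + β (τ j) + β (τ k) →
      ((U (σ i)).submatrix τ τ).map (IsLocalRing.residue A) j k = 0 := fun i j k h ↦ hvan _ _ _ h
  rcases destabilizing_weights (α ∘ σ) (β ∘ τ) (hα σ) (hβ τ) a01 a12 b01 b12 with
    ⟨ha, hb⟩ | ⟨h₁, h₂, h₃, h₄, h₅⟩ | ⟨h₁, h₂, h₃⟩ | ⟨h₁, h₂, h₃, h₄, h₅⟩ | ⟨h₁, h₂⟩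
  · refine ⟨fun i ↦ ?_, fun i ↦ ?_⟩
    · have h : α i = 0 := by simpa using congrFun ha (σ.symm i)
      rw [← A.valuation_le_one_iff]
      exact (congrArg Units.val (congrArg Additive.toMul h)).le
    · have h : β i = 0 := by simpa using congrFun hb (τ.symm i)
      rw [← A.valuation_le_one_iff]
      exact (congrArg Units.val (congrArg Additive.toMul h)).le
  · exact (hw.not_rank_le_one (hv 0 0 0 h₁) (hv 0 0 1 h₂) (hv 0 0 2 h₃) (hv 0 1 1 h₄)
      (hv 0 1 2 h₅)).elim
  · exact (hw.not_singular_basePoint (fun i ↦ hv i 0 0 (h₁ i)) (hv 0 0 1 h₂) (hv 0 0 2 h₃)).elim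
  · exact (hw.not_degenerate_pencil (hv 0 0 0 h₁) (hv 1 0 0 h₂) (hv 0 0 1 h₃) (hv 1 0 1 h₄)
      (h₅.imp (fun h ↦ ⟨hv 0 0 2 h.1, hv 1 0 2 h.2⟩)
        (fun h ↦ ⟨hv 0 1 1 h.1, hv 1 1 1 h.2⟩))).elim
  · exact (hw.not_common_tangent (fun i ↦ hv i 0 0 (h₁ i)) (fun i ↦ hv i 0 1 (h₂ i))).elim

lemma cyclicPencil_map {R S : Type*} [CommRing R] [CommRing S] (f : R →+* S)
    (c₁ c₂ c₃ c₄ c₅ : R) (x : Fin 3 → R) :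
    (cyclicPencil c₁ c₂ c₃ c₄ c₅ x).map f =
      cyclicPencil (f c₁) (f c₂) (f c₃) (f c₄) (f c₅) (f ∘ x) := by
  ext i j
  fin_cases i <;> fin_cases j <;> simp [cyclicPencil, map_ofNat f 2]

/-- The image of the cyclic net under a pair of matrices, as a triple of Gram matrices. -/
def cyclicNet {R : Type*} [CommRing R] (c : Fin 5 → R) (g h : Matrix (Fin 3) (Fin 3) R)
    (i : Fin 3) : Matrix (Fin 3) (Fin 3) R :=
  hᵀ * cyclicPencil (c 0) (c 1) (c 2) (c 3) (c 4) (g.col i) * h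

lemma cyclicNet_map {R S : Type*} [CommRing R] [CommRing S] (f : R →+* S) (c : Fin 5 → R)
    (g h : Matrix (Fin 3) (Fin 3) R) (i : Fin 3) :
    (cyclicNet c g h i).map f = cyclicNet (f ∘ c) (g.map f) (h.map f) i := by
  simp only [cyclicNet, Matrix.map_mul, cyclicPencil_map, transpose_map]
  rfl

lemma cyclicNet_mul_left {R : Type*} [CommRing R] (c : Fin 5 → R)
    (g g' h : Matrix (Fin 3) (Fin 3) R) (i : Fin 3) :
    cyclicNet c (g * g') h i = ∑ j, g' j i • cyclicNet c g h j := by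
  have : (g * g').col i = g *ᵥ g'.col i := by ext; simp [Matrix.mul_apply, mulVec, dotProduct]
  simp [cyclicNet, this, cyclicPencil_sum, Finset.mul_sum, Finset.sum_mul]

lemma cyclicNet_mul_right {R : Type*} [CommRing R] (c : Fin 5 → R)
    (g h h' : Matrix (Fin 3) (Fin 3) R) (i : Fin 3) :
    cyclicNet c g (h * h') i = h'ᵀ * cyclicNet c g h i * h' := by
  simp [cyclicNet, Matrix.mul_assoc]

lemma cyclicNet_submatrix {R : Type*} [CommRing R] (c : Fin 5 → R)
    (g h : Matrix (Fin 3) (Fin 3) R) (σ τ : Equiv.Perm (Fin 3)) (i : Fin 3) :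
    cyclicNet c (g.submatrix id σ) (h.submatrix id τ) i =
      (cyclicNet c g h (σ i)).submatrix τ τ := by
  ext j k
  simp [cyclicNet, Matrix.mul_apply]
  rfl

lemma isSmoothNet_residue_cyclicNet {A : Type*} [CommRing A] [IsLocalRing A]
    (h2 : IsUnit (2 : A)) (c : Fin 5 → A) (hc : ∀ i, IsUnit (c i))
    (P R : Matrix (Fin 3) (Fin 3) A) (hP : IsUnit P.det) (hR : IsUnit R.det)
    (σ τ : Equiv.Perm (Fin 3)) :
    IsSmoothNet fun i ↦ ((cyclicNet c P R (σ i)).submatrix τ τ).map (IsLocalRing.residue A) := by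
  have hperm : ∀ (X : Matrix (Fin 3) (Fin 3) A) (ρ : Equiv.Perm (Fin 3)), IsUnit X.det →
      ((X.submatrix id ρ).map (IsLocalRing.residue A)).det ≠ 0 := by
    intro X ρ hX
    have h : IsUnit (X.submatrix (Equiv.refl _) ρ).det := by
      rw [← isUnit_iff_isUnit_det, isUnit_submatrix_equiv, isUnit_iff_isUnit_det]
      exact hX
    have h' := (h.map (IsLocalRing.residue A)).ne_zero
    rwa [RingHom.map_det] at h'
  have hc' : ∀ i, IsLocalRing.residue A (c i) ≠ 0 := fun i ↦
    ((hc i).map (IsLocalRing.residue A)).ne_zero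
  have h2' : (2 : IsLocalRing.ResidueField A) ≠ 0 := by
    rw [← map_ofNat (IsLocalRing.residue A) 2]
    exact (h2.map (IsLocalRing.residue A)).ne_zero
  simp only [← cyclicNet_submatrix, cyclicNet_map]
  exact isSmoothNet_cyclic h2' (hc' 0) (hc' 1) (hc' 2) (hc' 3) (hc' 4) _ _ (hperm P σ hP)
    (hperm R τ hR)

/-- Properness of the orbit map of the cyclic net. -/
theorem integral_of_cyclicNet_integral {K : Type*} [Field K] (A : ValuationSubring K)
    (h2 : IsUnit (2 : A)) (c : Fin 5 → A) (hc : ∀ i, IsUnit (c i))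
    (g h : Matrix (Fin 3) (Fin 3) K) (hg : g.det = 1) (hh : h.det = 1)
    (hint : ∀ i j k, cyclicNet (A.subtype ∘ c) g h i j k ∈ A) :
    (∀ i j, g i j ∈ A) ∧ ∀ i j, h i j ∈ A := by
  obtain ⟨P, Q, t, hP, hQ, rfl⟩ := A.exists_smith 3 g
  obtain ⟨R, S, s, hR, hS, rfl⟩ := A.exists_smith 3 h
  have hdet : ∀ X : Matrix (Fin 3) (Fin 3) A, IsUnit X.det →
      A.valuation (X.map A.subtype).det = 1 := by
    intro X hX
    have := (A.valuation_eq_one_iff _).mp hX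
    rwa [← ValuationSubring.subtype_apply, RingHom.map_det] at this
  have ht : A.valuation (∏ i, t i) = 1 := by
    have := congrArg A.valuation hg
    rwa [det_mul, det_mul, det_diagonal, map_mul, map_mul, hdet P hP, hdet Q hQ, one_mul, mul_one,
      map_one] at this
  have hs : A.valuation (∏ i, s i) = 1 := by
    have := congrArg A.valuation hh
    rwa [det_mul, det_mul, det_diagonal, map_mul, map_mul, hdet R hR, hdet S hS, one_mul, mul_one,
      map_one] at this
  have hmul : ∀ X Y : Matrix (Fin 3) (Fin 3) K, (∀ i j, X i j ∈ A) → (∀ i j, Y i j ∈ A) →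
      ∀ i j, (X * Y) i j ∈ A := by
    intro X Y hX hY i j
    rw [Matrix.mul_apply]
    exact sum_mem fun k _ ↦ mul_mem (hX i k) (hY k j)
  have hmap : ∀ (X : Matrix (Fin 3) (Fin 3) A) i j, X.map A.subtype i j ∈ A :=
    fun X i j ↦ (X i j).2
  have hinv : ∀ X : Matrix (Fin 3) (Fin 3) A, IsUnit X.det →
      X.map A.subtype * X⁻¹.map A.subtype = 1 := by
    intro X hX
    rw [← Matrix.map_mul, Matrix.mul_nonsing_inv _ hX]
    simp
  -- the outer factors do not affect integrality
  have hint₁ : ∀ i j k, cyclicNet (A.subtype ∘ c) (P.map A.subtype * diagonal t)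
      (R.map A.subtype * diagonal s) i j k ∈ A := by
    intro i
    have e₁ : P.map A.subtype * diagonal t =
        P.map A.subtype * diagonal t * Q.map A.subtype * Q⁻¹.map A.subtype := by
      rw [Matrix.mul_assoc _ (Q.map A.subtype), hinv Q hQ, Matrix.mul_one]
    have e₂ : R.map A.subtype * diagonal s =
        R.map A.subtype * diagonal s * S.map A.subtype * S⁻¹.map A.subtype := by
      rw [Matrix.mul_assoc _ (S.map A.subtype), hinv S hS, Matrix.mul_one]
    rw [e₁, e₂, cyclicNet_mul_right, cyclicNet_mul_left]
    refine hmul _ _ (hmul _ _ (fun a b ↦ hmap S⁻¹ b a) fun j k ↦ ?_) (hmap _)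
    rw [Matrix.sum_apply]
    exact sum_mem fun l _ ↦ mul_mem (hmap _ _ _) (hint l j k)
  have hint₂ : ∀ i j k, t i * s j * s k * cyclicNet c P R i j k ∈ A := by
    intro i j k
    have h := hint₁ i j k
    have e : cyclicNet (A.subtype ∘ c) (P.map A.subtype) (R.map A.subtype) i j k =
        cyclicNet c P R i j k := by
      rw [← cyclicNet_map]; rfl
    rw [cyclicNet_mul_right, cyclicNet_mul_left, diagonal_transpose, mul_diagonal, diagonal_mul,
      Finset.sum_eq_single i (fun b _ hb ↦ by rw [diagonal_apply_ne _ hb, zero_smul]) (by simp),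
      diagonal_apply_eq, Matrix.smul_apply, smul_eq_mul, e] at h
    convert h using 1
    ring
  obtain ⟨ht', hs'⟩ := isUnit_weights_of_isSmoothNet A _ t s ht hs hint₂
    (isSmoothNet_residue_cyclicNet h2 c hc P R hP hR)
  have hdiag : ∀ u : Fin 3 → K, (∀ i, u i ∈ A) → ∀ i j, diagonal u i j ∈ A := by
    intro u hu i j
    rw [diagonal_apply]
    split_ifs
    exacts [hu i, zero_mem A]
  exact ⟨hmul _ _ (hmul _ _ (hmap P) (hdiag t ht')) (hmap Q),
    hmul _ _ (hmul _ _ (hmap R) (hdiag s hs')) (hmap S)⟩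

lemma cyclicNet_pi {T R : Type*} [CommRing R] (c : Fin 5 → R)
    (g h : T → Matrix (Fin 3) (Fin 3) R) (i j k : Fin 3) :
    cyclicNet (fun l (_ : T) ↦ c l) (of fun a b t ↦ g t a b) (of fun a b t ↦ h t a b) i j k =
      fun t ↦ cyclicNet c (g t) (h t) i j k := by
  funext t
  have e := cyclicNet_map (Pi.evalRingHom (fun _ : T ↦ R) t) (fun l (_ : T) ↦ c l)
    (of fun a b t ↦ g t a b) (of fun a b t ↦ h t a b) i
  have hg : (of fun a b t ↦ g t a b : Matrix (Fin 3) (Fin 3) (T → R)).map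
      (Pi.evalRingHom (fun _ : T ↦ R) t) = g t := by ext; rfl
  have hh : (of fun a b t ↦ h t a b : Matrix (Fin 3) (Fin 3) (T → R)).map
      (Pi.evalRingHom (fun _ : T ↦ R) t) = h t := by ext; rfl
  have hc : Pi.evalRingHom (fun _ : T ↦ R) t ∘ (fun l (_ : T) ↦ c l) = c := by ext; rfl
  rw [hg, hh, hc] at e
  rw [← e, map_apply, Pi.evalRingHom_apply]

lemma det_pi {T R : Type*} [CommRing R] (g : T → Matrix (Fin 3) (Fin 3) R)
    (hg : ∀ t, (g t).det = 1) : (of fun a b t ↦ g t a b : Matrix (Fin 3) (Fin 3) (T → R)).det = 1 := by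
  funext t
  rw [Pi.one_apply, ← hg t]
  exact RingHom.map_det (Pi.evalRingHom (fun _ : T ↦ R) t)
    (of fun a b t ↦ g t a b : Matrix (Fin 3) (Fin 3) (T → R))

/-- Properness of the orbit map, for a family of group elements specialised to a field. -/
lemma integral_of_family {T L K : Type*} [Field L] [Field K] (h2 : (2 : L) ≠ 0) (c : Fin 5 → L)
    (hc : ∀ i, c i ≠ 0) (g h : T → Matrix (Fin 3) (Fin 3) L) (hg : ∀ t, (g t).det = 1)
    (hh : ∀ t, (h t).det = 1) (φ : (T → L) →+* K) (A : ValuationSubring K)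
    (hL : ∀ a : L, φ (fun _ ↦ a) ∈ A)
    (hint : ∀ i j k, φ (fun t ↦ cyclicNet c (g t) (h t) i j k) ∈ A) :
    (∀ i j, φ (fun t ↦ g t i j) ∈ A) ∧ ∀ i j, φ (fun t ↦ h t i j) ∈ A := by
  let ι : L →+* A := (φ.comp (Pi.constRingHom T L)).codRestrict A hL
  refine integral_of_cyclicNet_integral A (by rw [← map_ofNat ι 2]; exact h2.isUnit.map ι) (ι ∘ c)
    (fun i ↦ (hc i).isUnit.map ι) ((of fun a b t ↦ g t a b).map φ) ((of fun a b t ↦ h t a b).map φ)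
    ?_ ?_ fun i j k ↦ ?_
  · rw [← RingHom.mapMatrix_apply, ← RingHom.map_det, det_pi g hg, map_one]
  · rw [← RingHom.mapMatrix_apply, ← RingHom.map_det, det_pi h hh, map_one]
  · have e := congrFun (congrFun (cyclicNet_map φ (fun l (_ : T) ↦ c l)
      (of fun a b t ↦ g t a b) (of fun a b t ↦ h t a b) i) j) k
    rw [map_apply, cyclicNet_pi] at e
    have := hint i j k
    rw [e] at this
    exact this

/-- A prime containing the kernel of a ring homomorphism is the centre of a place of a field over
which the target specialises. -/
lemma exists_place {R : Type*} {B : Type u} [CommRing R] [CommRing B] (f : R →+* B)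
    (P : Ideal R) [P.IsPrime] (h : RingHom.ker f ≤ P) :
    ∃ (K : Type u) (_ : Field K) (φ : B →+* K) (A : ValuationSubring K),
      (∀ r, φ (f r) ∈ A) ∧ ∀ r ∈ P, φ (f r) ∈ A.nonunits := by
  obtain ⟨Q, hQ, -, hdisj⟩ := (⊥ : Ideal B).exists_le_prime_disjoint (P.primeCompl.map f) <|
    Set.disjoint_left.mpr fun _ hI ⟨r, hr, hfr⟩ ↦ hr (h (hfr.trans hI))
  let ψ : R →+* FractionRing (B ⧸ Q) :=
    ((algebraMap (B ⧸ Q) (FractionRing (B ⧸ Q))).comp (Ideal.Quotient.mk Q)).comp f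
  have hker : RingHom.ker ψ ≤ P := by
    intro r hr
    have hrQ : f r ∈ Q := by
      rw [← Ideal.Quotient.eq_zero_iff_mem]
      exact (IsFractionRing.injective (B ⧸ Q) (FractionRing (B ⧸ Q))) (hr.trans (map_zero _).symm)
    by_contra hrP
    exact Set.disjoint_left.mp hdisj hrQ ⟨r, hrP, rfl⟩
  have hne : P.map ψ.rangeRestrict ≠ ⊤ := by
    intro htop
    rw [Ideal.map_eq_top_iff_of_ker_le ψ.rangeRestrict (ψ.ker_rangeRestrict.trans_le hker)
      (RingHom.isIntegral_of_surjective _ ψ.rangeRestrict_surjective)] at htop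
    exact ‹P.IsPrime›.ne_top htop
  obtain ⟨A, hA, hA'⟩ := Ideal.image_subset_nonunits_valuationSubring _ hne
  exact ⟨FractionRing (B ⧸ Q), inferInstance, (algebraMap _ _).comp (Ideal.Quotient.mk Q), A,
    fun r ↦ hA ⟨r, rfl⟩,
    fun r hr ↦ hA' ⟨ψ.rangeRestrict r, Ideal.mem_map_of_mem _ hr, rfl⟩⟩

/-- The Gram matrices of the three quadratic forms with coordinates `c`. -/
def netGram {R : Type*} [CommRing R] (c : Fin 18 → R) : Fin 3 → Matrix (Fin 3) (Fin 3) R :=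
  ![!![2 * c 0, c 9, c 12; c 9, 2 * c 3, c 15; c 12, c 15, 2 * c 6],
    !![2 * c 1, c 10, c 13; c 10, 2 * c 4, c 16; c 13, c 16, 2 * c 7],
    !![2 * c 2, c 11, c 14; c 11, 2 * c 5, c 17; c 14, c 17, 2 * c 8]]

lemma netGram_map {R S : Type*} [CommRing R] [CommRing S] (f : R →+* S) (c : Fin 18 → R) (i : Fin 3) :
    (netGram c i).map f = netGram (f ∘ c) i := by
  ext j k
  fin_cases i <;> fin_cases j <;> fin_cases k <;> simp [netGram, map_ofNat f 2]

lemma netGram_isSymm {R : Type*} [CommRing R] (c : Fin 18 → R) (i : Fin 3) : (netGram c i).IsSymm := by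
  ext j k
  fin_cases i <;> fin_cases j <;> fin_cases k <;> simp [netGram]

lemma exists_netGram_eq {L : Type*} [Field L] (h2 : (2 : L) ≠ 0)
    (N : Fin 3 → Matrix (Fin 3) (Fin 3) L) (hN : ∀ i, (N i).IsSymm) : ∃ c, netGram c = N := by
  refine ⟨![N 0 0 0 / 2, N 1 0 0 / 2, N 2 0 0 / 2, N 0 1 1 / 2, N 1 1 1 / 2, N 2 1 1 / 2,
    N 0 2 2 / 2, N 1 2 2 / 2, N 2 2 2 / 2, N 0 0 1, N 1 0 1, N 2 0 1, N 0 0 2, N 1 0 2, N 2 0 2,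
    N 0 1 2, N 1 1 2, N 2 1 2], ?_⟩
  have h10 := fun i ↦ (hN i).apply 0 1
  have h20 := fun i ↦ (hN i).apply 0 2
  have h21 := fun i ↦ (hN i).apply 1 2
  funext i
  ext j k
  fin_cases i <;> fin_cases j <;> fin_cases k <;>
    simp [netGram, h10, h20, h21, mul_div_cancel₀ _ h2]

lemma cyclicNet_isSymm {R : Type*} [CommRing R] (c : Fin 5 → R) (g h : Matrix (Fin 3) (Fin 3) R)
    (i : Fin 3) : (cyclicNet c g h i).IsSymm := by
  simp [Matrix.IsSymm, cyclicNet, Matrix.mul_assoc, (cyclicPencil_isSymm _ _ _ _ _ _).eq]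

/-- Over an algebraically closed field, membership in the orbit of the cyclic net can be tested
over an extension field. -/
lemma descend_orbit {L k : Type*} [Field L] [IsAlgClosed L] [Field k] (ι : L →+* k)
    (c : Fin 5 → L) (v : Fin 18 → L) (g h : Matrix (Fin 3) (Fin 3) k) (hg : g.det = 1)
    (hh : h.det = 1) (hv : ∀ i, netGram (ι ∘ v) i = cyclicNet (ι ∘ c) g h i) :
    ∃ g' h' : Matrix (Fin 3) (Fin 3) L, g'.det = 1 ∧ h'.det = 1 ∧
      ∀ i, netGram v i = cyclicNet c g' h' i := by
  let gX : Matrix (Fin 3) (Fin 3) (MvPolynomial (Fin 2 × Fin 3 × Fin 3) L) :=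
    of fun i j ↦ MvPolynomial.X (0, i, j)
  let hX : Matrix (Fin 3) (Fin 3) (MvPolynomial (Fin 2 × Fin 3 × Fin 3) L) :=
    of fun i j ↦ MvPolynomial.X (1, i, j)
  let ev : MvPolynomial (Fin 2 × Fin 3 × Fin 3) L →+* k :=
    MvPolynomial.eval₂Hom ι fun s ↦ ![g, h] s.1 s.2.1 s.2.2
  have hgX : gX.map ev = g := by ext i j; simp [gX, ev]
  have hhX : hX.map ev = h := by ext i j; simp [hX, ev]
  have hC : ev.comp MvPolynomial.C = ι := by ext; simp [ev]
  obtain ⟨M, hM, hle⟩ := Ideal.exists_le_maximal _ (RingHom.ker_ne_top ev)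
  obtain ⟨x, rfl⟩ := MvPolynomial.isMaximal_iff_eq_vanishingIdeal_singleton.mp hM
  have hx : ∀ p q, ev p = ev q → MvPolynomial.eval x p = MvPolynomial.eval x q := by
    intro p q hpq
    have : p - q ∈ RingHom.ker ev := by simp [hpq]
    have := (MvPolynomial.mem_vanishingIdeal_singleton_iff x _).mp (hle this)
    rwa [map_sub, sub_eq_zero] at this
  refine ⟨gX.map (MvPolynomial.eval x), hX.map (MvPolynomial.eval x), ?_, ?_, fun i ↦ ?_⟩
  · rw [← RingHom.mapMatrix_apply, ← RingHom.map_det, ← map_one (MvPolynomial.eval x)]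
    apply hx
    rw [RingHom.map_det, RingHom.mapMatrix_apply, hgX, hg, map_one]
  · rw [← RingHom.mapMatrix_apply, ← RingHom.map_det, ← map_one (MvPolynomial.eval x)]
    apply hx
    rw [RingHom.map_det, RingHom.mapMatrix_apply, hhX, hh, map_one]
  · have e₁ : netGram v i = (netGram (MvPolynomial.C (σ := Fin 2 × Fin 3 × Fin 3) ∘ v) i).map
        (MvPolynomial.eval x) := by
      rw [netGram_map]; congr 1; ext; simp
    have e₂ : cyclicNet c (gX.map (MvPolynomial.eval x)) (hX.map (MvPolynomial.eval x)) i =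
        (cyclicNet (MvPolynomial.C ∘ c) gX hX i).map (MvPolynomial.eval x) := by
      rw [cyclicNet_map]; congr 1; ext; simp
    rw [e₁, e₂]
    ext j k
    apply hx
    rw [← map_apply (f := ev), ← map_apply (f := ev), netGram_map, cyclicNet_map, hgX, hhX,
      ← Function.comp_assoc, ← Function.comp_assoc, ← RingHom.coe_comp, hC, hv]

/-- The coordinates of the dual cyclic vector with coefficients `c`. -/
def cyclicCoords {R : Type*} [CommRing R] (c : Fin 5 → R) : Fin 18 → R :=
  ![c 0, 0, 0, 0, c 1, 0, 0, c 2, 0, 0, 0, c 3, 0, 0, 0, c 4, 0, 0]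

lemma sum_netGram_cyclicCoords {R : Type*} [CommRing R] (c : Fin 5 → R) (x : Fin 3 → R) :
    ∑ i, x i • netGram (cyclicCoords c) i = cyclicPencil (c 0) (c 1) (c 2) (c 3) (c 4) x := by
  ext j k
  fin_cases j <;> fin_cases k <;>
    simp [cyclicCoords, netGram, cyclicPencil, Fin.sum_univ_three] <;> ring

lemma eval_act3 {L : Type*} [CommRing L]
    (g : SpecialLinearGroup (Fin 3) L × SpecialLinearGroup (Fin 3) L)
    (f : MvPolynomial (Fin 3 ⊕ Fin 3) L) (x y : Fin 3 → L) :
    MvPolynomial.eval (Sum.elim x y) (act3 g f) =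
      MvPolynomial.eval (Sum.elim (g.1.1 *ᵥ x) (g.2.1 *ᵥ y)) f := by
  induction f using MvPolynomial.induction_on with
  | C a => simp [act3]
  | add p q hp hq => simp only [act3, map_add] at hp hq ⊢; rw [hp, hq]
  | mul_X p n hp =>
    simp only [act3, map_mul] at hp ⊢
    rw [hp]
    rcases n with n | n <;> simp [mulVec, dotProduct]

lemma two_mul_eval_toPoly3 {L : Type*} [CommRing L] (c : Fin 18 → L) (x y : Fin 3 → L) :
    2 * MvPolynomial.eval (Sum.elim x y) (toPoly3 c) =
      y ⬝ᵥ ((∑ i, x i • netGram c i) *ᵥ y) := by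
  simp [toPoly3, netGram, Fin.sum_univ_three, dotProduct, mulVec]
  ring

lemma sum_cyclicNet {R : Type*} [CommRing R] (c : Fin 5 → R) (g h : Matrix (Fin 3) (Fin 3) R)
    (x : Fin 3 → R) :
    ∑ i, x i • cyclicNet c g h i =
      hᵀ * cyclicPencil (c 0) (c 1) (c 2) (c 3) (c 4) (g *ᵥ x) * h := by
  simp [cyclicNet, cyclicPencil_sum, Finset.mul_sum, Finset.sum_mul]

lemma two_mul_eval_act3_cyclic {L : Type*} [CommRing L] (c : Fin 5 → L)
    (g : SpecialLinearGroup (Fin 3) L × SpecialLinearGroup (Fin 3) L) (x y : Fin 3 → L) :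
    2 * MvPolynomial.eval (Sum.elim x y) (act3 g (toPoly3 (cyclicCoords c))) =
      y ⬝ᵥ ((∑ i, x i • cyclicNet c g.1.1 g.2.1 i) *ᵥ y) := by
  rw [eval_act3, two_mul_eval_toPoly3, sum_netGram_cyclicCoords, sum_cyclicNet,
    ← mulVec_mulVec, ← mulVec_mulVec, dotProduct_mulVec y, vecMul_transpose]

lemma eq_of_dotProduct_mulVec {L : Type*} [Field L] (h2 : (2 : L) ≠ 0)
    {M N : Matrix (Fin 3) (Fin 3) L} (hM : M.IsSymm) (hN : N.IsSymm)
    (h : ∀ y, y ⬝ᵥ (M *ᵥ y) = y ⬝ᵥ (N *ᵥ y)) : M = N := by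
  ext i j
  have hi := h (Pi.single i 1)
  have hj := h (Pi.single j 1)
  have hij := h (Pi.single i 1 + Pi.single j 1)
  simp only [mulVec_add, dotProduct_add, add_dotProduct, mulVec_single_one, single_one_dotProduct,
    col_apply] at hi hj hij
  rw [hi, hj, hM.apply i j, hN.apply i j] at hij
  apply mul_left_cancel₀ h2
  linear_combination hij

lemma toPoly3_eq_act3_cyclic_iff {L : Type*} [Field L] [Infinite L] (h2 : (2 : L) ≠ 0)
    (c : Fin 5 → L) (v : Fin 18 → L)
    (g : SpecialLinearGroup (Fin 3) L × SpecialLinearGroup (Fin 3) L) :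
    toPoly3 v = act3 g (toPoly3 (cyclicCoords c)) ↔
      ∀ i, netGram v i = cyclicNet c g.1.1 g.2.1 i := by
  constructor
  · intro h i
    refine eq_of_dotProduct_mulVec h2 (netGram_isSymm _ _) (cyclicNet_isSymm _ _ _ _) fun y ↦ ?_
    have e := two_mul_eval_act3_cyclic c g (Pi.single i 1) y
    rw [← h, two_mul_eval_toPoly3] at e
    simpa [Pi.single_apply] using e
  · intro h
    refine MvPolynomial.funext fun z ↦ mul_left_cancel₀ h2 ?_
    rw [← Sum.elim_comp_inl_inr z, two_mul_eval_toPoly3, two_mul_eval_act3_cyclic]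
    simp only [h]

lemma netGram_injective {L : Type*} [Field L] (h2 : (2 : L) ≠ 0) :
    Function.Injective (netGram (R := L)) := by
  intro u v h
  have e := fun i j k ↦ congrFun (congrFun (congrFun h i) j) k
  funext n
  fin_cases n
  · simpa [netGram, h2] using e 0 0 0
  · simpa [netGram, h2] using e 1 0 0
  · simpa [netGram, h2] using e 2 0 0
  · simpa [netGram, h2] using e 0 1 1
  · simpa [netGram, h2] using e 1 1 1
  · simpa [netGram, h2] using e 2 1 1
  · simpa [netGram, h2] using e 0 2 2
  · simpa [netGram, h2] using e 1 2 2
  · simpa [netGram, h2] using e 2 2 2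
  · simpa [netGram] using e 0 0 1
  · simpa [netGram] using e 1 0 1
  · simpa [netGram] using e 2 0 1
  · simpa [netGram] using e 0 0 2
  · simpa [netGram] using e 1 0 2
  · simpa [netGram] using e 2 0 2
  · simpa [netGram] using e 0 1 2
  · simpa [netGram] using e 1 1 2
  · simpa [netGram] using e 2 1 2

/-- In characteristic different from two, every common zero of the polynomials vanishing on the
orbit of a dual cyclic vector is in the orbit. -/
lemma exists_cyclicNet_of_eval_eq_zero {L : Type*} [Field L] [IsAlgClosed L] (h2 : (2 : L) ≠ 0)
    (c : Fin 5 → L) (hc : ∀ i, c i ≠ 0) (v : Fin 18 → L)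
    (hv : ∀ q : MvPolynomial (Fin 18) L, (∀ u, (∃ g h : Matrix (Fin 3) (Fin 3) L, g.det = 1 ∧
      h.det = 1 ∧ ∀ i, netGram u i = cyclicNet c g h i) → MvPolynomial.eval u q = 0) →
      MvPolynomial.eval v q = 0) :
    ∃ g h : Matrix (Fin 3) (Fin 3) L, g.det = 1 ∧ h.det = 1 ∧
      ∀ i, netGram v i = cyclicNet c g h i := by
  let T := SpecialLinearGroup (Fin 3) L × SpecialLinearGroup (Fin 3) L
  choose γ hγ using fun t : T ↦ exists_netGram_eq h2 (cyclicNet c t.1.1 t.2.1)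
    (cyclicNet_isSymm _ _ _)
  let f : MvPolynomial (Fin 18) L →+* (T → L) := RingHom.pi fun t ↦ MvPolynomial.eval (γ t)
  have hP : (RingHom.ker (MvPolynomial.eval v)).IsPrime := RingHom.ker_isPrime _
  have hker : RingHom.ker f ≤ RingHom.ker (MvPolynomial.eval v) := by
    intro q hq
    refine hv q fun u ⟨g, h, hg, hh, hu⟩ ↦ ?_
    have hu' : u = γ (⟨g, hg⟩, ⟨h, hh⟩) :=
      netGram_injective h2 (funext fun i ↦ (hu i).trans (congrFun (hγ (⟨g, hg⟩, ⟨h, hh⟩)) i).symm)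
    rw [hu']
    exact congrFun hq (⟨g, hg⟩, ⟨h, hh⟩)
  obtain ⟨K, _, φ, A, hA, hA'⟩ := exists_place f _ hker
  have hfC : ∀ a : L, f (MvPolynomial.C a) = fun _ ↦ a := fun a ↦
    funext fun t ↦ MvPolynomial.eval_C a
  have hfX : ∀ i j k, f (netGram MvPolynomial.X i j k) =
      fun t : T ↦ cyclicNet c t.1.1 t.2.1 i j k := by
    intro i j k
    funext t
    rw [← hγ t]
    have := congrFun (congrFun (netGram_map (MvPolynomial.eval (γ t)) MvPolynomial.X i) j) k
    rw [map_apply] at this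
    exact this.trans (by congr 2; ext; simp)
  have hL : ∀ a : L, φ (fun _ ↦ a) ∈ A := fun a ↦ hfC a ▸ hA _
  obtain ⟨hg, hh⟩ := integral_of_family h2 c hc (fun t : T ↦ t.1.1) (fun t ↦ t.2.1)
    (fun t ↦ t.1.2) (fun t ↦ t.2.2) φ A hL fun i j k ↦ hfX i j k ▸ hA _
  let ι : L →+* A := (φ.comp (Pi.constRingHom T L)).codRestrict A hL
  let ρ := IsLocalRing.residue A
  let g : Matrix (Fin 3) (Fin 3) A := of fun i j ↦ ⟨_, hg i j⟩
  let h : Matrix (Fin 3) (Fin 3) A := of fun i j ↦ ⟨_, hh i j⟩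
  let x : Fin 18 → A := fun n ↦ ⟨φ (f (MvPolynomial.X n)), hA _⟩
  have hgA : g.map A.subtype = (of fun a b t ↦ t.1.1 a b :
    Matrix (Fin 3) (Fin 3) (T → L)).map φ := by ext; rfl
  have hhA : h.map A.subtype = (of fun a b t ↦ t.2.1 a b :
    Matrix (Fin 3) (Fin 3) (T → L)).map φ := by ext; rfl
  have hinj : Function.Injective A.subtype := Subtype.val_injective
  have hgdet : g.det = 1 := by
    apply hinj
    rw [RingHom.map_det, RingHom.mapMatrix_apply, hgA, ← RingHom.mapMatrix_apply, ← RingHom.map_det,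
      det_pi _ fun t : T ↦ t.1.2, map_one, map_one]
  have hhdet : h.det = 1 := by
    apply hinj
    rw [RingHom.map_det, RingHom.mapMatrix_apply, hhA, ← RingHom.mapMatrix_apply, ← RingHom.map_det,
      det_pi _ fun t : T ↦ t.2.2, map_one, map_one]
  have hx : ∀ i, netGram x i = cyclicNet (ι ∘ c) g h i := by
    intro i
    refine Matrix.map_injective hinj ?_
    beta_reduce
    rw [netGram_map, cyclicNet_map, hgA, hhA]
    have hc' : A.subtype ∘ ι ∘ c = φ ∘ fun l (_ : T) ↦ c l := rfl
    have hx' : A.subtype ∘ x = (φ.comp f) ∘ MvPolynomial.X := rfl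
    rw [hc', ← cyclicNet_map, hx', ← netGram_map]
    ext j k
    rw [map_apply, map_apply, RingHom.comp_apply, hfX, cyclicNet_pi]
  have hρ : ρ ∘ x = ρ.comp ι ∘ v := by
    funext n
    suffices hsub : x n - ι (v n) ∈ IsLocalRing.maximalIdeal A by
      rw [← IsLocalRing.residue_eq_zero_iff, map_sub, sub_eq_zero] at hsub
      exact hsub
    have : φ (f (MvPolynomial.X n - MvPolynomial.C (v n))) ∈ A.nonunits := hA' _ (by simp)
    rw [← SetLike.mem_coe, ← A.image_maximalIdeal] at this
    obtain ⟨y, hy, hyx⟩ := this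
    convert hy
    apply hinj
    rw [map_sub, map_sub, hfC] at hyx
    exact hyx.symm
  refine descend_orbit (ρ.comp ι) c v (g.map ρ) (h.map ρ) ?_ ?_ fun i ↦ ?_
  · rw [← RingHom.mapMatrix_apply, ← RingHom.map_det, hgdet, map_one]
  · rw [← RingHom.mapMatrix_apply, ← RingHom.map_det, hhdet, map_one]
  · rw [← hρ, ← netGram_map, hx, cyclicNet_map]
    rfl

lemma IsAlgClosed.isIntegrallyClosedIn_range {L K : Type*} [Field L] [IsAlgClosed L] [Field K]
    (ι : L →+* K) : IsIntegrallyClosedIn ι.range K := by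
  let := ι.toAlgebra
  rw [Subring.isIntegrallyClosedIn_iff]
  rintro y ⟨q, hq, hqy⟩
  obtain ⟨r, rfl, -, hr⟩ := Polynomial.lifts_and_natDegree_eq_and_monic (f := ι.rangeRestrict)
    (Polynomial.map_surjective _ ι.rangeRestrict_surjective q) hq
  rw [Polynomial.eval₂_map] at hqy
  have hy : IsIntegral L y := ⟨r, hr, hqy⟩
  exact minpoly.mem_range_of_degree_eq_one L y
    (IsAlgClosed.degree_eq_one_of_irreducible L (minpoly.irreducible hy))

/-- An infinite-valued function acquires a pole at some place trivial on the constants. -/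
lemma exists_place_of_infinite_range {S L : Type u} [Field L] [IsAlgClosed L] (x : S → L)
    (hx : (Set.range x).Infinite) :
    ∃ (K : Type u) (_ : Field K) (φ : (S → L) →+* K) (A : ValuationSubring K),
      (∀ a : L, φ (fun _ ↦ a) ∈ A) ∧ φ x ∉ A := by
  let f : Polynomial L →+* (S → L) := RingHom.pi fun s ↦ Polynomial.evalRingHom (x s)
  have hf : ∀ q, f q = 0 → q = 0 := by
    intro q hq
    refine Polynomial.eq_zero_of_infinite_isRoot q (hx.mono ?_)
    rintro _ ⟨s, rfl⟩
    exact congrFun hq s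
  obtain ⟨Q, hQ, -, hdisj⟩ := (⊥ : Ideal (S → L)).exists_le_prime_disjoint
    ((nonZeroDivisors (Polynomial L)).map f) <| Set.disjoint_left.mpr fun _ hI ⟨q, hq, hfq⟩ ↦
      nonZeroDivisors.ne_zero hq (hf q (hfq.trans hI))
  let φ : (S → L) →+* FractionRing ((S → L) ⧸ Q) :=
    (algebraMap _ _).comp (Ideal.Quotient.mk Q)
  have hφ : ∀ q, φ (f q) = 0 → q = 0 := by
    intro q hq
    have hrQ : f q ∈ Q := by
      rw [← Ideal.Quotient.eq_zero_iff_mem]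
      exact (IsFractionRing.injective ((S → L) ⧸ Q) (FractionRing ((S → L) ⧸ Q)))
        (hq.trans (map_zero _).symm)
    by_contra hne
    exact Set.disjoint_left.mp hdisj hrQ ⟨q, mem_nonZeroDivisors_of_ne_zero hne, rfl⟩
  clear_value φ
  let ι : L →+* FractionRing ((S → L) ⧸ Q) := φ.comp (Pi.constRingHom S L)
  have hC : ∀ a, f (Polynomial.C a) = fun _ ↦ a := fun a ↦ funext fun s ↦ Polynomial.eval_C
  have hX : f Polynomial.X = x := funext fun s ↦ Polynomial.eval_X
  have hxι : φ x ∉ ι.range := by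
    rintro ⟨a, ha⟩
    have : φ (f (Polynomial.X - Polynomial.C a)) = 0 := by
      rw [map_sub, map_sub, hX, hC, sub_eq_zero]
      exact ha.symm
    exact Polynomial.X_sub_C_ne_zero a (hφ _ this)
  have := IsAlgClosed.isIntegrallyClosedIn_range ι
  obtain ⟨A, hA, hxA⟩ := Subring.exists_le_valuationSubring_of_isIntegrallyClosedIn hxι
  exact ⟨_, inferInstance, φ, A, fun a ↦ hA ⟨a, rfl⟩, hxA⟩

/-- In characteristic different from two, the stabiliser of a dual cyclic vector is finite. -/
lemma finite_stabilizer_cyclicNet {L : Type u} [Field L] [IsAlgClosed L] (h2 : (2 : L) ≠ 0)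
    (c : Fin 5 → L) (hc : ∀ i, c i ≠ 0) (N : Fin 3 → Matrix (Fin 3) (Fin 3) L) :
    {g : SpecialLinearGroup (Fin 3) L × SpecialLinearGroup (Fin 3) L |
      ∀ i, N i = cyclicNet c g.1.1 g.2.1 i}.Finite := by
  set S := {g : SpecialLinearGroup (Fin 3) L × SpecialLinearGroup (Fin 3) L |
      ∀ i, N i = cyclicNet c g.1.1 g.2.1 i} with hS
  have hfin : ∀ x : S → L, (∀ (K : Type u) (_ : Field K) (φ : (S → L) →+* K)
      (A : ValuationSubring K), (∀ a : L, φ (fun _ ↦ a) ∈ A) → φ x ∈ A) → (Set.range x).Finite := by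
    intro x hx
    by_contra hinf
    obtain ⟨K, _, φ, A, hL, hxA⟩ := exists_place_of_infinite_range x hinf
    exact hxA (hx K _ φ A hL)
  have key : ∀ (K : Type u) (_ : Field K) (φ : (S → L) →+* K)
      (A : ValuationSubring K), (∀ a : L, φ (fun _ ↦ a) ∈ A) →
      (∀ i j, φ (fun t ↦ t.1.1.1 i j) ∈ A) ∧ ∀ i j, φ (fun t ↦ t.1.2.1 i j) ∈ A := by
    intro K _ φ A hL
    refine integral_of_family h2 c hc _ _ (fun t : S ↦ t.1.1.2) (fun t ↦ t.1.2.2) φ A hL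
      fun i j k ↦ ?_
    have : (fun t : S ↦ cyclicNet c t.1.1.1 t.1.2.1 i j k) = fun _ ↦ N i j k :=
      funext fun t ↦ by rw [← t.2 i]
    rw [this]
    exact hL _
  have hg : ∀ i j, (Set.range fun t : S ↦ t.1.1.1 i j).Finite :=
    fun i j ↦ hfin _ fun K _ φ A hL ↦ (key K _ φ A hL).1 i j
  have hh : ∀ i j, (Set.range fun t : S ↦ t.1.2.1 i j).Finite :=
    fun i j ↦ hfin _ fun K _ φ A hL ↦ (key K _ φ A hL).2 i j
  have hpi := (Set.Finite.pi' fun i ↦ Set.Finite.pi' (hg i)).prod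
    (Set.Finite.pi' fun i ↦ Set.Finite.pi' (hh i))
  refine Set.Finite.of_finite_image (f := fun t ↦ (t.1.1, t.2.1)) (hpi.subset ?_) ?_
  · rintro _ ⟨t, ht, rfl⟩
    exact ⟨fun i j ↦ ⟨⟨t, ht⟩, rfl⟩, fun i j ↦ ⟨⟨t, ht⟩, rfl⟩⟩
  · rintro ⟨g, h⟩ - ⟨g', h'⟩ - e
    simp only [Prod.mk.injEq] at e
    exact Prod.ext (Subtype.ext e.1) (Subtype.ext e.2)

lemma act3_one {L : Type*} [Field L] [Infinite L] (f : MvPolynomial (Fin 3 ⊕ Fin 3) L) :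
    act3 1 f = f :=
  MvPolynomial.funext fun z ↦ by
    rw [← Sum.elim_comp_inl_inr z, eval_act3]
    simp

lemma act3_act3 {L : Type*} [Field L] [Infinite L]
    (a b : SpecialLinearGroup (Fin 3) L × SpecialLinearGroup (Fin 3) L)
    (f : MvPolynomial (Fin 3 ⊕ Fin 3) L) : act3 a (act3 b f) = act3 (b * a) f :=
  MvPolynomial.funext fun z ↦ by
    rw [← Sum.elim_comp_inl_inr z, eval_act3, eval_act3, eval_act3]
    simp

/-- A one-parameter subgroup of `SL₃ × SL₃`, multiplied by a transvection. -/
def twistedTorus {L : Type*} [Field L] (μ : L) (s : Lˣ) :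
    SpecialLinearGroup (Fin 3) L × SpecialLinearGroup (Fin 3) L :=
  (⟨!![(s : L) ^ 2, 0, 0; 0, (s⁻¹ : L) ^ 4, 0; 0, 0, (s : L) ^ 2], by simp [det_fin_three]; field⟩,
   ⟨!![(s⁻¹ : L), 0, 0; 0, (s⁻¹ : L), 0; 0, μ * s⁻¹, (s : L) ^ 2], by simp [det_fin_three]; field⟩)

/-- The coordinates of `c₁ X T² + c₅ μ X U² + c₃ Y W² + c₄ Z T U + c₅ s³ X U W`. -/
def degeneration {R : Type*} [CommRing R] (c : Fin 5 → R) (μ s : R) : Fin 18 → R :=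
  ![c 0, 0, 0, c 4 * μ, 0, 0, 0, c 2, 0, 0, 0, c 3, 0, 0, 0, c 4 * s ^ 3, 0, 0]

lemma toPoly3_degeneration {L : Type*} [Field L] [Infinite L] (h2 : (2 : L) = 0) (c : Fin 5 → L)
    (μ : L) (hμ : c 2 * μ ^ 2 = c 1) (s : Lˣ) :
    toPoly3 (degeneration c μ s) = act3 (twistedTorus μ s) (toPoly3 (cyclicCoords c)) :=
  MvPolynomial.funext fun z ↦ by
    rw [← Sum.elim_comp_inl_inr z, eval_act3]
    have hs := s.ne_zero
    simp [twistedTorus, degeneration, toPoly3, cyclicCoords, ← hμ, dotProduct,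
      Fin.sum_univ_three]
    field_simp
    linear_combination -(c 2 * z (Sum.inl 1) * μ * z (Sum.inr 1) *
      (μ * z (Sum.inr 1) + z (Sum.inr 2) * (s : L) ^ 3)) * h2

lemma act3_twistedTorus_degeneration {L : Type*} [Field L] [Infinite L] (c : Fin 5 → L) (μ : L)
    (s : Lˣ) :
    act3 (twistedTorus 0 s) (toPoly3 (degeneration c μ 0)) = toPoly3 (degeneration c μ 0) :=
  MvPolynomial.funext fun z ↦ by
    rw [← Sum.elim_comp_inl_inr z, eval_act3]
    have hs := s.ne_zero
    simp [twistedTorus, degeneration, toPoly3, dotProduct, Fin.sum_univ_three]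
    field_simp

lemma eval_degeneration_zero {L : Type*} [Field L] [Infinite L] (c : Fin 5 → L) (μ : L)
    (q : MvPolynomial (Fin 18) L)
    (hq : ∀ s : Lˣ, MvPolynomial.eval (degeneration c μ s) q = 0) :
    MvPolynomial.eval (degeneration c μ 0) q = 0 := by
  let r : Polynomial L := MvPolynomial.eval₂ Polynomial.C
    (degeneration (Polynomial.C ∘ c) (Polynomial.C μ) Polynomial.X) q
  have hr : ∀ s, r.eval s = MvPolynomial.eval (degeneration c μ s) q := by
    intro s
    rw [← Polynomial.coe_evalRingHom, MvPolynomial.eval₂_comp_left, ← MvPolynomial.eval₂_id]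
    congr 1
    · ext; simp
    · funext n
      fin_cases n <;> simp [degeneration]
  have hr0 : r = 0 := by
    refine Polynomial.eq_zero_of_infinite_isRoot r
      ((Set.finite_singleton (0 : L)).infinite_compl.mono fun s hs ↦ ?_)
    exact (hr s).trans (hq (Units.mk0 s hs))
  rw [← hr, hr0, Polynomial.eval_zero]

/-- In characteristic two no dual cyclic vector is stable. -/
lemma not_stable3_cyclicCoords {L : Type*} [Field L] [IsAlgClosed L] (h2 : (2 : L) = 0)
    (c : Fin 5 → L) (hc : c 2 ≠ 0) : ¬ Stable3 (cyclicCoords c) := by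
  have : Infinite L := IsAlgClosed.instInfinite
  have : Infinite {a : L // a ≠ 0} := (Set.finite_singleton (0 : L)).infinite_compl.to_subtype
  have : Infinite Lˣ := .of_injective _ unitsEquivNeZero.symm.injective
  rintro ⟨⟨P, hP⟩, hfin⟩
  obtain ⟨μ, hμ⟩ := IsAlgClosed.exists_pow_nat_eq (c 1 / c 2) two_pos
  have hμ' : c 2 * μ ^ 2 = c 1 := by rw [hμ, mul_div_cancel₀ _ hc]
  have hmem : degeneration c μ 0 ∈ {x | ∀ q ∈ P, MvPolynomial.eval x q = 0} := fun q hq ↦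
    eval_degeneration_zero c μ q fun s ↦
      (hP.subset ⟨twistedTorus μ s, toPoly3_degeneration h2 c μ hμ' s⟩ :) q hq
  obtain ⟨g, hg⟩ := hP.symm.subset hmem
  refine Set.infinite_of_injective_forall_mem (f := fun s : Lˣ ↦ g * twistedTorus 0 s * g⁻¹) ?_
    (fun s ↦ ?_) hfin
  · intro s t hst
    have h : twistedTorus (0 : L) s = twistedTorus 0 t := mul_left_cancel (mul_right_cancel hst)
    have := congrFun (congrFun (congrArg (fun x ↦ x.2.1) h) 0) 0
    exact Units.ext (by simpa [twistedTorus] using this)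
  · change act3 _ _ = _
    rw [← act3_act3, ← act3_act3, ← hg, act3_twistedTorus_degeneration, hg, act3_act3,
      mul_inv_cancel, act3_one]

/-- Away from characteristic two every dual cyclic vector is stable. -/
lemma stable3_cyclicCoords {L : Type*} [Field L] [IsAlgClosed L] (h2 : (2 : L) ≠ 0)
    (c : Fin 5 → L) (hc : ∀ i, c i ≠ 0) : Stable3 (cyclicCoords c) := by
  have : Infinite L := IsAlgClosed.instInfinite
  have horbit : ∀ v : Fin 18 → L,
      (∃ g : SpecialLinearGroup (Fin 3) L × SpecialLinearGroup (Fin 3) L,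
        toPoly3 v = act3 g (toPoly3 (cyclicCoords c))) ↔
      ∃ g h : Matrix (Fin 3) (Fin 3) L, g.det = 1 ∧ h.det = 1 ∧
        ∀ i, netGram v i = cyclicNet c g h i := by
    intro v
    simp only [toPoly3_eq_act3_cyclic_iff h2]
    exact ⟨fun ⟨t, ht⟩ ↦ ⟨t.1.1, t.2.1, t.1.2, t.2.2, ht⟩,
      fun ⟨g, h, hg, hh, ht⟩ ↦ ⟨(⟨g, hg⟩, ⟨h, hh⟩), ht⟩⟩
  refine ⟨⟨{q | ∀ u, (∃ g h : Matrix (Fin 3) (Fin 3) L, g.det = 1 ∧ h.det = 1 ∧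
    ∀ i, netGram u i = cyclicNet c g h i) → MvPolynomial.eval u q = 0}, ?_⟩, ?_⟩
  · ext v
    rw [Set.mem_ofPred_eq, horbit]
    exact ⟨fun hv q hq ↦ hq v hv, exists_cyclicNet_of_eval_eq_zero h2 c hc v⟩
  · simpa only [eq_comm (a := act3 _ _), toPoly3_eq_act3_cyclic_iff h2] using
      finite_stabilizer_cyclicNet h2 c hc (netGram (cyclicCoords c))

/-
STATEMENT 5 (Corollary 3.5(2)): for p prime and L an algebraic closure of 𝔽_p, the dual
cyclic vector v = c₁·XT² + c₂·YU² + c₃·YW² + c₄·ZTU + c₅·XUW with c₁,…,c₅ ∈ Lˣ is stable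
for the action of SL₃(L) × SL₃(L) if and only if p ≠ 2.
Coordinate placement (order a,…,r): a = c₁, e = c₂, h = c₃, l = c₄, p = c₅.
-/
theorem dual_cyclic_stable3_iff_p_ne_two
    (p : ℕ) (hp : p.Prime)
    {L : Type*} [Field L] [IsAlgClosed L] [CharP L p]
    (c₁ c₂ c₃ c₄ c₅ : Lˣ) :
    Stable3 ![(c₁ : L), 0, 0, 0, (c₂ : L), 0, 0, (c₃ : L), 0, 0, 0, (c₄ : L), 0, 0, 0,
      (c₅ : L), 0, 0] ↔ p ≠ 2 := by
  have h2 : (2 : L) = 0 ↔ p = 2 := by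
    rw [← Nat.cast_ofNat, CharP.cast_eq_zero_iff L p, Nat.prime_dvd_prime_iff_eq hp Nat.prime_two]
  have hc : ∀ i, (![(c₁ : L), c₂, c₃, c₄, c₅] : Fin 5 → L) i ≠ 0 := by
    intro i
    fin_cases i <;> simp
  rw [Ne, ← h2]
  exact ⟨fun h h2' ↦ not_stable3_cyclicCoords h2' ![(c₁ : L), c₂, c₃, c₄, c₅] (hc 2) h,
    fun h2' ↦ stable3_cyclicCoords h2' ![(c₁ : L), c₂, c₃, c₄, c₅] hc⟩
end
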